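/- arXiv:2105.05984 — 3 statements merged into one kernel-verified Lean document; each statement's English description precedes it below -/
import Mathlib

section
/- There is a universal constant C such that the following holds. Let U ≥ 2, let X ⊆ {0, …, U−1} be a set of k ≥ 1 keys, let p be a prime with p > 4U², let m be an integer with 1 ≤ m ≤ U, let h be a random linear hash function with parameters p and m, fix a key x ∈ {0, …, U−1} with x ∉ X and buckets a, b ∈ {0, …, m−1}, and let F = #{ y ∈ X : h(y) = b } (a random variable over the choice of h). Then | E(F) − k/m | ≤ C and | E(F | h(x) = a) − k/m | ≤ C, and for every λ > 0, Pr( |F − E(F)| ≥ λ·√(E(F)) | h(x) = a ) ≤ C · U · log₂(U) / (λ² · k). -/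
/-- The number of keys of `X` hashed to bucket `b` by `v ↦ ((σv + τ) mod p) mod m`. -/
def bucketLoad (p m b : ℕ) (X : Finset ℕ) (στ : ℕ × ℕ) : ℕ :=
  (X.filter fun y => ((στ.1 * y + στ.2) % p) % m = b).card

/-- The expectation of the bucket load `F` over the uniform choice of `(σ, τ) ∈ [p]²`. -/
noncomputable def expLoad (p m b : ℕ) (X : Finset ℕ) : ℝ :=
  (∑ στ ∈ Finset.range p ×ˢ Finset.range p, (bucketLoad p m b X στ : ℝ)) / (p : ℝ) ^ 2

/-- The pairs `(σ, τ) ∈ [p]²` for which `h(x) = a`. -/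
def condEvent (p m x a : ℕ) : Finset (ℕ × ℕ) :=
  (Finset.range p ×ˢ Finset.range p).filter fun στ => ((στ.1 * x + στ.2) % p) % m = a

/-!
Fix `h(x) = a` and write `J = ⌊p/m⌋ + 1`. Pairwise independence gives the means, so everything
hinges on the joint law of the hash values of three keys `x, y, z`. With `y - x = βg`,
`z - x = γg` and `gcd(β, γ) = 1`, the values before reduction modulo `m` obey
`(β - γ) h(x) + γ h(y) - β h(z) = 0` modulo `p`, so the pairs `(σ, τ)` sending the three keys to
prescribed buckets are at most as many as the solutions of `(β - γ) i + γ j - β k = r` in the box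
`[0, J)³`, for some `r`; let `N(r)` be the number of these solutions.

Shifting `r` by one of the coefficients telescopes one of the three sums, so `N` changes by at most
a two-variable count, which is small. By Bézout any two residues are joined by few such shifts;
hence `N` stays close to its average `J³/p`, with error `O(J² / max(|β|, |γ|))`. Summing
`1 / max(|β|, |γ|) = gcd(|y - x|, |z - x|) / max(|y - x|, |z - x|)` over all pairs of keys gives
`O(U log U)`, which bounds the conditional variance, and Chebyshev's inequality concludes.
-/

open Finset

section ProgressionSum

variable {G : Type*} [AddCommGroup G]

/-- The sum of `f` over the arithmetic progression `r, r - e, …, r - (J - 1) • e`. For `f` the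
point mass at `0`, iterating it over `e₁, …, eₙ` counts the representations
`r = k₁ • e₁ + ⋯ + kₙ • eₙ` with all `kᵢ < J`. -/
def progressionSum (e : G) (J : ℕ) (f : G → ℝ) (r : G) : ℝ :=
  ∑ k ∈ range J, f (r - k • e)

lemma progressionSum_comm (e e' : G) (I J : ℕ) (f : G → ℝ) :
    progressionSum e I (progressionSum e' J f) = progressionSum e' J (progressionSum e I f) := by
  funext r
  simp only [progressionSum]
  rw [sum_comm]
  simp only [sub_right_comm]

lemma progressionSum_nonneg {f : G → ℝ} (hf : ∀ r, 0 ≤ f r) (e : G) (J : ℕ) (r : G) :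
    0 ≤ progressionSum e J f r :=
  sum_nonneg fun _ _ => hf _

lemma progressionSum_le {f : G → ℝ} {B : ℝ} (hf : ∀ r, f r ≤ B) (e : G) (J : ℕ) (r : G) :
    progressionSum e J f r ≤ J * B := by
  simpa [progressionSum] using sum_le_card_nsmul (range J) _ B fun k _ => hf (r - k • e)

lemma sum_progressionSum [Fintype G] (e : G) (J : ℕ) (f : G → ℝ) :
    ∑ r, progressionSum e J f r = J * ∑ r, f r := by
  simp only [progressionSum]
  rw [sum_comm]
  have shift (k : ℕ) : ∑ r, f (r - k • e) = ∑ r, f r :=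
    Equiv.sum_comp (Equiv.subRight (k • e)) f
  simp only [shift, sum_const, card_range, nsmul_eq_mul]

lemma progressionSum_add_sub (e : G) (J : ℕ) (f : G → ℝ) (r : G) :
    progressionSum e J f (r + e) - progressionSum e J f r = f (r + e) - f (r + e - J • e) := by
  have telescope := sum_range_sub' (fun k : ℕ => f (r + e - k • e)) J
  simpa [progressionSum, sum_sub_distrib, add_smul, sub_add_eq_sub_sub, add_sub_right_comm]
    using telescope

lemma abs_progressionSum_add_sub_le {f : G → ℝ} {B : ℝ} (hf₀ : ∀ r, 0 ≤ f r) (hf : ∀ r, f r ≤ B)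
    (e : G) (J : ℕ) (r : G) :
    |progressionSum e J f (r + e) - progressionSum e J f r| ≤ B := by
  rw [progressionSum_add_sub]
  exact abs_sub_le_of_nonneg_of_le (hf₀ _) (hf _) (hf₀ _) (hf _)

lemma progressionSum_single_zero [DecidableEq G] (e : G) (J : ℕ) (r : G) :
    progressionSum e J (Pi.single 0 1) r = #{k ∈ range J | k • e = r} := by
  simp [progressionSum, Pi.single_apply, sub_eq_zero, eq_comm]

lemma progressionSum_card_fiber [DecidableEq G] {ι : Type*} (e : G) (J : ℕ) (S : Finset ι)
    (φ : ι → G) (r : G) :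
    progressionSum e J (fun r' => (#{s ∈ S | φ s = r'} : ℝ)) r =
      #{t ∈ range J ×ˢ S | t.1 • e + φ t.2 = r} := by
  simp only [progressionSum, card_filter, Nat.cast_sum, sum_product, eq_sub_iff_add_eq']

end ProgressionSum

section BoundedIncrements

variable {G : Type*} [AddCommGroup G] {f : G → ℝ} {B : ℝ}

lemma abs_add_zsmul_sub_le {e : G} (h : ∀ r, |f (r + e) - f r| ≤ B) (n : ℤ) (r : G) :
    |f (r + n • e) - f r| ≤ n.natAbs * B := by
  have forward (n : ℕ) (r : G) : |f (r + n • e) - f r| ≤ n * B := by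
    have := dist_le_range_sum_of_dist_le (f := fun k : ℕ => f (r + k • e)) (d := fun _ => B) n
      fun {k} _ => by
        rw [dist_comm, Real.dist_eq, succ_nsmul, ← add_assoc]
        exact h _
    rw [dist_comm] at this
    simpa [Real.dist_eq] using this
  obtain ⟨n, rfl | rfl⟩ := n.eq_nat_or_neg
  · simpa using forward n r
  · simpa [abs_sub_comm] using forward n (r + (-(n : ℤ)) • e)

lemma le_average_add_of_sub_le [Fintype G] (r : G) (h : ∀ r', f r - f r' ≤ B) :
    f r ≤ (∑ r', f r') / Fintype.card G + B := by
  have hcard : (0 : ℝ) < Fintype.card G := by exact_mod_cast Fintype.card_pos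
  have hsum : ∑ r', (f r - f r') ≤ Fintype.card G * B := by
    simpa using sum_le_card_nsmul univ _ B fun r' _ => h r'
  rw [sum_sub_distrib, sum_const, nsmul_eq_mul, card_univ] at hsum
  rw [← sub_le_iff_le_add, le_div_iff₀ hcard]
  linarith

end BoundedIncrements

section LinearForms

lemma card_le_div_add_one_of_dvd_sub {S : Finset ℤ} {a : ℤ} {n L : ℕ}
    (hS : S ⊆ Icc a (a + L)) (hdvd : ∀ s ∈ S, ∀ t ∈ S, (n : ℤ) ∣ s - t) :
    #S ≤ L / n + 1 := by
  rw [← card_range (L / n + 1)]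
  refine card_le_card_of_injOn (fun s => (s - a).toNat / n) (fun s hs => ?_) fun s hs t ht hst => ?_
  · have := mem_Icc.mp (hS hs)
    exact mem_range.mpr (Nat.lt_succ_of_le (Nat.div_le_div_right (by lia)))
  · have hs₀ := mem_Icc.mp (hS hs)
    have ht₀ := mem_Icc.mp (hS ht)
    have hmod : (s - a).toNat ≡ (t - a).toNat [MOD n] := by
      rw [Nat.modEq_iff_dvd, Int.toNat_of_nonneg (by lia), Int.toNat_of_nonneg (by lia)]
      simpa using hdvd t ht s hs
    have := Nat.ext_div_mod hst hmod
    lia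

variable {β γ : ℤ}

lemma card_box_linear_eq_le (hβ : β ≠ 0) (hcop : IsCoprime β γ) (J : ℕ) (s : ℤ) :
    #{t ∈ range J ×ˢ range J | β * (t.1 : ℤ) + γ * t.2 = s} ≤ J / β.natAbs + 1 := by
  set S := {t ∈ range J ×ˢ range J | β * (t.1 : ℤ) + γ * t.2 = s} with hS
  have hinj : Set.InjOn (fun t : ℕ × ℕ => (t.2 : ℤ)) S := by
    intro t ht t' ht' h
    have h₂ : t.2 = t'.2 := Nat.cast_injective h
    have h₁ : β * (t.1 : ℤ) = β * t'.1 := by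
      linarith [(mem_filter.mp ht).2, (mem_filter.mp ht').2, congrArg (γ * ·) h]
    exact Prod.ext (by exact_mod_cast mul_left_cancel₀ hβ h₁) h₂
  rw [← card_image_of_injOn hinj]
  refine card_le_div_add_one_of_dvd_sub (a := 0) (fun j hj => ?_) fun j hj j' hj' => ?_
  · obtain ⟨t, ht, rfl⟩ := mem_image.mp hj
    simp only [hS, mem_filter, mem_product, mem_range] at ht
    simpa using ht.1.2.le
  · obtain ⟨t, ht, rfl⟩ := mem_image.mp hj
    obtain ⟨t', ht', rfl⟩ := mem_image.mp hj'
    refine Int.natAbs_dvd.mpr (hcop.dvd_of_dvd_mul_left ⟨t'.1 - t.1, ?_⟩)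
    linarith [(mem_filter.mp ht).2, (mem_filter.mp ht').2]

lemma abs_linear_le_of_mem_box {J i j : ℕ} (hi : i < J) (hj : j < J) :
    |β * i + γ * j| ≤ ((β.natAbs + γ.natAbs) * J : ℕ) := by
  calc |β * i + γ * j| ≤ |β * i| + |γ * j| := abs_add_le _ _
    _ = β.natAbs * i + γ.natAbs * j := by simp [abs_mul]
    _ ≤ β.natAbs * J + γ.natAbs * J := by gcongr
    _ = ((β.natAbs + γ.natAbs) * J : ℕ) := by push_cast; ring

lemma card_box_linear_zmod_eq_le (hβ : β ≠ 0) (hcop : IsCoprime β γ) (p J : ℕ) (r : ZMod p) :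
    #{t ∈ range J ×ˢ range J | (β * t.1 + γ * t.2 : ZMod p) = r} ≤
      (J / β.natAbs + 1) * (2 * ((β.natAbs + γ.natAbs) * J) / p + 1) := by
  set S := {t ∈ range J ×ˢ range J | (β * t.1 + γ * t.2 : ZMod p) = r}
  set K := (β.natAbs + γ.natAbs) * J with hK
  let φ : ℕ × ℕ → ℤ := fun t => β * t.1 + γ * t.2
  have hfiber : ∀ s ∈ S.image φ, #{t ∈ S | φ t = s} ≤ J / β.natAbs + 1 := fun s _ =>
    (card_le_card (filter_subset_filter _ (filter_subset _ _))).trans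
      (card_box_linear_eq_le hβ hcop J s)
  refine (card_le_mul_card_image S _ hfiber).trans (Nat.mul_le_mul_left _ ?_)
  refine card_le_div_add_one_of_dvd_sub (a := -K) (fun s hs => ?_) fun s hs s' hs' => ?_
  · obtain ⟨t, ht, rfl⟩ := mem_image.mp hs
    simp only [S, mem_filter, mem_product, mem_range] at ht
    have := abs_le.mp (abs_linear_le_of_mem_box (β := β) (γ := γ) ht.1.1 ht.1.2)
    rw [mem_Icc]
    push_cast [← hK] at this ⊢
    constructor <;> linarith
  · obtain ⟨t, ht, rfl⟩ := mem_image.mp hs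
    obtain ⟨t', ht', rfl⟩ := mem_image.mp hs'
    rw [← ZMod.intCast_zmod_eq_zero_iff_dvd]
    push_cast [φ]
    rw [(mem_filter.mp ht).2, (mem_filter.mp ht').2, sub_self]

end LinearForms

section CollinearCount

variable {β γ : ℤ} {p J : ℕ}

lemma progressionSum_progressionSum_single_le [NeZero p] (hβ : β ≠ 0) (hcop : IsCoprime β γ)
    (hγβ : γ.natAbs ≤ 2 * β.natAbs) (hβJ : β.natAbs ≤ J) (r : ZMod p) :
    progressionSum (β : ZMod p) J (progressionSum (γ : ZMod p) J (Pi.single 0 1)) r ≤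
      12 * (J : ℝ) ^ 2 / p + 2 * J / β.natAbs := by
  set D := β.natAbs
  have hp₀ : (0 : ℝ) < p := by exact_mod_cast NeZero.pos p
  have hD₀ : (0 : ℝ) < D := by exact_mod_cast Int.natAbs_pos.mpr hβ
  have hcount : progressionSum (β : ZMod p) J (progressionSum (γ : ZMod p) J (Pi.single 0 1)) r =
      #{t ∈ range J ×ˢ range J | (β * t.1 + γ * t.2 : ZMod p) = r} := by
    rw [funext (progressionSum_single_zero (γ : ZMod p) J), progressionSum_card_fiber]
    simp only [nsmul_eq_mul, mul_comm]
  have hfiber : ((J / D : ℕ) : ℝ) + 1 ≤ 2 * J / D := by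
    have hle : ((J / D : ℕ) : ℝ) ≤ J / D := Nat.cast_div_le
    have hone : (1 : ℝ) ≤ J / D := (one_le_div hD₀).mpr (by exact_mod_cast hβJ)
    linarith [mul_div_assoc (2 : ℝ) J D]
  have hvalues : ((2 * ((D + γ.natAbs) * J) / p : ℕ) : ℝ) + 1 ≤ 6 * D * J / p + 1 := by
    have hγ : (γ.natAbs : ℝ) ≤ 2 * D := by exact_mod_cast hγβ
    have hle : ((2 * ((D + γ.natAbs) * J) / p : ℕ) : ℝ) ≤ 2 * ((D + γ.natAbs) * J) / p := by
      exact_mod_cast Nat.cast_div_le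
    refine add_le_add_left (hle.trans ?_) 1
    calc 2 * ((D + γ.natAbs) * J) / (p : ℝ) ≤ 2 * ((D + 2 * D) * J) / p := by gcongr
      _ = 6 * D * J / p := by ring
  calc progressionSum (β : ZMod p) J (progressionSum (γ : ZMod p) J (Pi.single 0 1)) r
      ≤ (((J / D : ℕ) : ℝ) + 1) * (((2 * ((D + γ.natAbs) * J) / p : ℕ) : ℝ) + 1) := by
        rw [hcount]
        exact_mod_cast card_box_linear_zmod_eq_le hβ hcop p J r
    _ ≤ 2 * J / D * (6 * D * J / p + 1) := by gcongr
    _ = 12 * (J : ℝ) ^ 2 / p + 2 * J / D := by field_simp; ring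

lemma exists_small_bezout (hβ : β ≠ 0) (hcop : IsCoprime β γ) (w : ℤ) :
    ∃ l i : ℤ, l * γ + i * β = w ∧ l.natAbs ≤ β.natAbs ∧
      i.natAbs * β.natAbs ≤ w.natAbs + β.natAbs * γ.natAbs := by
  obtain ⟨u, v, huv⟩ := hcop
  set l := w * v % β
  have hdvd : β ∣ w - l * γ :=
    ⟨w * u + w * v / β * γ, by
      linear_combination (-w) * huv - γ * (Int.emod_add_mul_ediv (w * v) β)⟩
  obtain ⟨i, hi⟩ := hdvd
  have hl_nonneg : 0 ≤ l := Int.emod_nonneg _ hβ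
  have hl_lt : l < |β| := Int.emod_lt_abs _ hβ
  have hl_le : l.natAbs ≤ β.natAbs := by rw [Int.abs_eq_natAbs] at hl_lt; lia
  refine ⟨l, i, by linear_combination -hi, hl_le, ?_⟩
  calc i.natAbs * β.natAbs = (w - l * γ).natAbs := by rw [hi, Int.natAbs_mul, mul_comm]
    _ ≤ w.natAbs + (l * γ).natAbs := Int.natAbs_sub_le _ _
    _ ≤ w.natAbs + β.natAbs * γ.natAbs := by
        rw [Int.natAbs_mul]
        gcongr

lemma abs_sub_le_of_bounded_increments [NeZero p] (hβ : β ≠ 0) (hcop : IsCoprime β γ)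
    (hγβ : γ.natAbs ≤ β.natAbs) (hβp : 3 * β.natAbs ^ 2 ≤ p) {f : ZMod p → ℝ} {B : ℝ}
    (hincγ : ∀ r, |f (r + γ) - f r| ≤ B) (hincβγ : ∀ r, |f (r + (β - γ)) - f r| ≤ B)
    (r r' : ZMod p) :
    |f r - f r'| ≤ 3 * p / β.natAbs * B := by
  set D := β.natAbs
  have hD₀ : (0 : ℝ) < D := by exact_mod_cast Int.natAbs_pos.mpr hβ
  have hB₀ : 0 ≤ B := (abs_nonneg _).trans (hincγ 0)
  have hincβ (s : ZMod p) : |f (s + β) - f s| ≤ 2 * B := by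
    have hsecond := hincβγ (s + γ)
    rw [add_add_sub_cancel] at hsecond
    linarith [hincγ s, abs_sub_le (f (s + β)) (f (s + γ)) (f s)]
  obtain ⟨l, i, hli, hl, hi⟩ := exists_small_bezout hβ hcop ((r - r').val : ℤ)
  have hr : r = r' + l • (γ : ZMod p) + i • (β : ZMod p) := by
    have := congrArg (Int.cast : ℤ → ZMod p) hli
    push_cast [ZMod.natCast_zmod_val] at this
    rw [zsmul_eq_mul, zsmul_eq_mul]
    linear_combination -this
  have hlR : (l.natAbs : ℝ) ≤ D := by exact_mod_cast hl
  have hiR : (i.natAbs : ℝ) * D ≤ p + D ^ 2 := by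
    have hval : (r - r').val < p := ZMod.val_lt _
    have hmul : D * γ.natAbs ≤ D ^ 2 := by rw [sq]; gcongr
    have : i.natAbs * D ≤ p + D ^ 2 := by lia
    exact_mod_cast this
  have hlength : (l.natAbs : ℝ) + 2 * i.natAbs ≤ 3 * p / D := by
    have hβpR : 3 * (D : ℝ) ^ 2 ≤ p := by exact_mod_cast hβp
    rw [le_div_iff₀ hD₀]
    nlinarith
  calc |f r - f r'|
      ≤ |f r - f (r' + l • (γ : ZMod p))| + |f (r' + l • (γ : ZMod p)) - f r'| := abs_sub_le _ _ _
    _ ≤ i.natAbs * (2 * B) + l.natAbs * B := by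
        refine add_le_add ?_ (abs_add_zsmul_sub_le hincγ l r')
        rw [hr]
        exact abs_add_zsmul_sub_le hincβ i _
    _ = (l.natAbs + 2 * i.natAbs) * B := by ring
    _ ≤ 3 * p / D * B := by gcongr

/-- The number of `(i, j, k) ∈ [0, J)³` with `(β - γ) i + γ j - β k = r` in `ZMod p`. The
coefficients are those of the affine relation between three values of an affine function at points
proportional to `0`, `β`, `γ`. -/
def collinearCount (p : ℕ) (β γ : ℤ) (J : ℕ) : ZMod p → ℝ :=
  progressionSum (β - γ : ZMod p) J
    (progressionSum (-β : ZMod p) J (progressionSum (γ : ZMod p) J (Pi.single 0 1)))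

lemma collinearCount_eq_card (r : ZMod p) :
    collinearCount p β γ J r =
      #{t ∈ range J ×ˢ (range J ×ˢ range J) |
        ((β - γ) * t.1 + (-β * t.2.1 + γ * t.2.2) : ZMod p) = r} := by
  rw [collinearCount, funext (progressionSum_single_zero (γ : ZMod p) J),
    funext (progressionSum_card_fiber (-β : ZMod p) J (range J) _), progressionSum_card_fiber]
  simp only [nsmul_eq_mul, mul_comm]

lemma sum_collinearCount [NeZero p] : ∑ r : ZMod p, collinearCount p β γ J r = (J : ℝ) ^ 3 := by
  simp only [collinearCount, sum_progressionSum, sum_pi_single', mem_univ, if_true]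
  ring

lemma collinearCount_le_average_add [NeZero p] {B : ℝ} (hβ : β ≠ 0) (hcop : IsCoprime β γ)
    (hγβ : γ.natAbs ≤ β.natAbs) (hβp : 3 * β.natAbs ^ 2 ≤ p)
    (hγ : ∀ r, progressionSum (-β : ZMod p) J (progressionSum (γ : ZMod p) J (Pi.single 0 1)) r ≤ B)
    (hβγ : ∀ r,
      progressionSum (-β : ZMod p) J (progressionSum (β - γ : ZMod p) J (Pi.single 0 1)) r ≤ B)
    (r : ZMod p) :
    collinearCount p β γ J r ≤ (J : ℝ) ^ 3 / p + 3 * p / β.natAbs * B := by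
  have hnonneg (e e' : ZMod p) :
      ∀ s, 0 ≤ progressionSum e J (progressionSum e' J (Pi.single 0 1)) s :=
    progressionSum_nonneg (progressionSum_nonneg (fun t => (Pi.single_nonneg.mpr zero_le_one :
      (0 : ZMod p → ℝ) ≤ Pi.single 0 1) t) e' J) e J
  have hrotate : collinearCount p β γ J = progressionSum (γ : ZMod p) J
      (progressionSum (-β : ZMod p) J (progressionSum (β - γ : ZMod p) J (Pi.single 0 1))) := by
    rw [collinearCount, progressionSum_comm (-β : ZMod p), progressionSum_comm (β - γ : ZMod p),
      progressionSum_comm (β - γ : ZMod p)]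
  have hincβγ (s : ZMod p) :
      |collinearCount p β γ J (s + (β - γ)) - collinearCount p β γ J s| ≤ B :=
    abs_progressionSum_add_sub_le (hnonneg _ _) hγ _ J s
  have hincγ (s : ZMod p) : |collinearCount p β γ J (s + γ) - collinearCount p β γ J s| ≤ B := by
    rw [hrotate]
    exact abs_progressionSum_add_sub_le (hnonneg _ _) hβγ _ J s
  simpa only [sum_collinearCount, ZMod.card] using le_average_add_of_sub_le r fun r' =>
    le_of_abs_le (abs_sub_le_of_bounded_increments hβ hcop hγβ hβp hincγ hincβγ r r')

lemma collinearCount_le [NeZero p] (hβ : β ≠ 0) (hcop : IsCoprime β γ)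
    (hγβ : γ.natAbs ≤ β.natAbs) (hβp : 3 * β.natAbs ^ 2 ≤ p) (hβJ : β.natAbs ≤ J) (r : ZMod p) :
    collinearCount p β γ J r ≤ (J : ℝ) ^ 3 / p + 42 * J ^ 2 / β.natAbs := by
  set D := β.natAbs with hD
  set B : ℝ := 12 * (J : ℝ) ^ 2 / p + 2 * J / D with hB
  have hp₀ : (0 : ℝ) < p := by exact_mod_cast NeZero.pos p
  have hD₀ : (0 : ℝ) < D := by exact_mod_cast Int.natAbs_pos.mpr hβ
  have hγ (s : ZMod p) :
      progressionSum (-β : ZMod p) J (progressionSum (γ : ZMod p) J (Pi.single 0 1)) s ≤ B := by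
    simpa [hB, hD] using progressionSum_progressionSum_single_le (J := J) (neg_ne_zero.mpr hβ)
      hcop.neg_left (by rw [Int.natAbs_neg]; lia) (by rwa [Int.natAbs_neg]) s
  have hβγ (s : ZMod p) :
      progressionSum (-β : ZMod p) J (progressionSum (β - γ : ZMod p) J (Pi.single 0 1)) s ≤ B := by
    have hcop' : IsCoprime (-β) (β - γ) := by
      obtain ⟨u, v, huv⟩ := hcop
      exact ⟨-(u + v), -v, by linear_combination huv⟩
    simpa [hB, hD] using progressionSum_progressionSum_single_le (J := J) (neg_ne_zero.mpr hβ)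
      hcop' (by rw [Int.natAbs_neg]; lia) (by rwa [Int.natAbs_neg]) s
  rcases le_total ((J : ℝ) * D) p with hJD | hJD
  · have hJp : (J : ℝ) / p ≤ 1 / D := (div_le_div_iff₀ hp₀ hD₀).mpr (by linarith)
    calc collinearCount p β γ J r ≤ J * B := progressionSum_le hγ _ J r
      _ = 12 * (J : ℝ) ^ 2 * (J / p) + 2 * J ^ 2 / D := by rw [hB]; ring
      _ ≤ 12 * (J : ℝ) ^ 2 * (1 / D) + 2 * J ^ 2 / D := by gcongr
      _ = 14 * (J : ℝ) ^ 2 / D := by ring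
      _ ≤ 42 * (J : ℝ) ^ 2 / D := by gcongr; norm_num
      _ ≤ (J : ℝ) ^ 3 / p + 42 * J ^ 2 / D := le_add_of_nonneg_left (by positivity)
  · have hpD : (p : ℝ) / D ≤ J := (div_le_iff₀ hD₀).mpr hJD
    calc collinearCount p β γ J r ≤ (J : ℝ) ^ 3 / p + 3 * p / D * B :=
        collinearCount_le_average_add hβ hcop hγβ hβp hγ hβγ r
      _ = (J : ℝ) ^ 3 / p + (36 * J ^ 2 / D + 6 * J / D * (p / D)) := by rw [hB]; field_simp; ring
      _ ≤ (J : ℝ) ^ 3 / p + (36 * J ^ 2 / D + 6 * J / D * J) := by gcongr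
      _ = (J : ℝ) ^ 3 / p + 42 * J ^ 2 / D := by ring

end CollinearCount

section GcdSums

lemma sum_gcd_le_mul_card_divisors (n : ℕ) :
    ∑ d ∈ Ioc 0 n, d.gcd n ≤ n * #n.divisors := by
  rcases Nat.eq_zero_or_pos n with rfl | hn
  · simp
  calc ∑ d ∈ Ioc 0 n, d.gcd n
      ≤ ∑ d ∈ Ioc 0 n, ∑ g ∈ n.divisors, if g ∣ d then g else 0 := by
        gcongr with d
        have hmem : d.gcd n ∈ n.divisors := Nat.mem_divisors.mpr ⟨Nat.gcd_dvd_right d n, hn.ne'⟩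
        simpa [Nat.gcd_dvd_left] using
          single_le_sum (f := fun g => if g ∣ d then g else 0) (fun _ _ => Nat.zero_le _) hmem
    _ = ∑ g ∈ n.divisors, n / g * g := by
        rw [sum_comm]
        simp only [← sum_filter, sum_const, Nat.Ioc_filter_dvd_card_eq_div, smul_eq_mul]
    _ ≤ ∑ _g ∈ n.divisors, n := by gcongr; exact Nat.div_mul_le_self _ _
    _ = n * #n.divisors := by rw [sum_const, smul_eq_mul, mul_comm]

lemma sum_card_divisors_le (n : ℕ) :
    ∑ d ∈ Ioc 0 n, (#d.divisors : ℝ) ≤ n * (1 + Real.log n) := by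
  have hsigma := ArithmeticFunction.sum_Ioc_sigma0_eq_sum_div n
  simp only [ArithmeticFunction.sigma_zero_apply] at hsigma
  calc ∑ d ∈ Ioc 0 n, (#d.divisors : ℝ) = ∑ d ∈ Ioc 0 n, ((n / d : ℕ) : ℝ) := by
        exact_mod_cast hsigma
    _ ≤ ∑ d ∈ Ioc 0 n, n * (d : ℝ)⁻¹ := by gcongr; exact Nat.cast_div_le
    _ = n * (harmonic n : ℝ) := by
        rw [← mul_sum, harmonic_eq_sum_Icc]
        push_cast
        rfl
    _ ≤ n * (1 + Real.log n) := by gcongr; exact harmonic_le_one_add_log n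

/-- The ratio `gcd(d, e) / max(d, e)`, i.e. the reciprocal of the larger of the two numbers after
division by their greatest common divisor. It bounds the correlation of the hash values of two keys
at distances `d` and `e` from a third one. -/
noncomputable def gcdRatio (d e : ℕ) : ℝ := d.gcd e / (max d e : ℕ)

lemma gcdRatio_nonneg (d e : ℕ) : 0 ≤ gcdRatio d e := by
  unfold gcdRatio
  positivity

lemma gcdRatio_comm (d e : ℕ) : gcdRatio d e = gcdRatio e d := by
  rw [gcdRatio, gcdRatio, Nat.gcd_comm, max_comm]

lemma gcdRatio_mul_right_of_coprime {d e g : ℕ} (hcop : d.Coprime e) (hed : e ≤ d) (hg : 0 < g) :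
    gcdRatio (d * g) (e * g) = 1 / d := by
  rw [gcdRatio, Nat.gcd_mul_right, hcop, max_eq_left (Nat.mul_le_mul_right g hed), one_mul,
    Nat.cast_mul, div_mul_cancel_right₀ (by exact_mod_cast hg.ne'), one_div]

lemma sum_gcdRatio_of_le_le_card_divisors {n M : ℕ} (hMn : M ≤ n) :
    ∑ d ∈ Ioc 0 n with d ≤ M, gcdRatio d M ≤ #M.divisors := by
  have hfilter : {d ∈ Ioc 0 n | d ≤ M} = Ioc 0 M := by
    ext d
    simp only [mem_filter, mem_Ioc]
    lia
  have hratio : ∀ d ∈ Ioc 0 M, gcdRatio d M = (d.gcd M : ℝ) / M := fun d hd => by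
    rw [gcdRatio, max_eq_right (mem_Ioc.mp hd).2]
  rw [hfilter, sum_congr rfl hratio, ← sum_div]
  refine div_le_of_le_mul₀ M.cast_nonneg (Nat.cast_nonneg _) ?_
  rw [mul_comm]
  exact_mod_cast sum_gcd_le_mul_card_divisors M

lemma sum_sum_gcdRatio_le (n : ℕ) :
    ∑ d ∈ Ioc 0 n, ∑ e ∈ Ioc 0 n, gcdRatio d e ≤ 2 * (n * (1 + Real.log n)) := by
  have hhalf : ∑ e ∈ Ioc 0 n, ∑ d ∈ Ioc 0 n with d ≤ e, gcdRatio d e ≤ n * (1 + Real.log n) :=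
    (sum_le_sum fun e he => sum_gcdRatio_of_le_le_card_divisors (mem_Ioc.mp he).2).trans
      (sum_card_divisors_le n)
  have hsplit (d e : ℕ) :
      gcdRatio d e ≤ (if d ≤ e then gcdRatio d e else 0) + if e ≤ d then gcdRatio e d else 0 := by
    have h₀ := gcdRatio_nonneg d e
    rw [gcdRatio_comm e d]
    split_ifs <;> first | lia | linarith
  calc ∑ d ∈ Ioc 0 n, ∑ e ∈ Ioc 0 n, gcdRatio d e
      ≤ ∑ d ∈ Ioc 0 n, ∑ e ∈ Ioc 0 n,
          ((if d ≤ e then gcdRatio d e else 0) + if e ≤ d then gcdRatio e d else 0) := by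
        gcongr with d _ e
        exact hsplit d e
    _ = 2 * ∑ e ∈ Ioc 0 n, ∑ d ∈ Ioc 0 n with d ≤ e, gcdRatio d e := by
        simp only [sum_add_distrib, sum_filter]
        rw [sum_comm, two_mul]
    _ ≤ 2 * (n * (1 + Real.log n)) := by gcongr

lemma sum_natAbs_sub_le {U x : ℕ} {X : Finset ℕ} (hX : X ⊆ range U) (hx : x < U) (hxX : x ∉ X)
    {f : ℕ → ℝ} (hf : ∀ d, 0 ≤ f d) :
    ∑ y ∈ X, f ((y : ℤ) - x).natAbs ≤ 2 * ∑ d ∈ Ioc 0 U, f d := by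
  have hmaps : ∀ y ∈ X, ((y : ℤ) - x).natAbs ∈ Ioc 0 U := fun y hy => by
    have := mem_range.mp (hX hy)
    have := ne_of_mem_of_not_mem hy hxX
    rw [mem_Ioc]
    lia
  rw [← sum_fiberwise_of_maps_to hmaps, mul_sum]
  gcongr with d
  have hfiber : {y ∈ X | ((y : ℕ) - x : ℤ).natAbs = d} ⊆ {x + d, x - d} := fun y hy => by
    have := (mem_filter.mp hy).2
    rw [mem_insert, mem_singleton]
    lia
  calc ∑ y ∈ X with ((y : ℕ) - x : ℤ).natAbs = d, f ((y : ℤ) - x).natAbs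
      = #{y ∈ X | ((y : ℕ) - x : ℤ).natAbs = d} * f d := by
        rw [sum_congr rfl fun y hy => by rw [(mem_filter.mp hy).2], sum_const, nsmul_eq_mul]
    _ ≤ 2 * f d := by
        gcongr
        · exact hf d
        · exact_mod_cast (card_le_card hfiber).trans card_le_two

lemma one_le_logb_two {U : ℕ} (hU : 2 ≤ U) : 1 ≤ Real.logb 2 U := by
  rw [Real.le_logb_iff_rpow_le one_lt_two (by positivity), Real.rpow_one]
  exact_mod_cast hU

lemma log_le_logb_two {U : ℕ} (hU : 1 ≤ U) : Real.log U ≤ Real.logb 2 U :=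
  le_div_self (Real.log_nonneg (by exact_mod_cast hU)) (Real.log_pos one_lt_two)
    (Real.log_two_lt_d9.le.trans (by norm_num))

lemma sum_sum_gcdRatio_natAbs_sub_le {U x : ℕ} {X : Finset ℕ} (hU : 2 ≤ U) (hX : X ⊆ range U)
    (hx : x < U) (hxX : x ∉ X) :
    ∑ y ∈ X, ∑ z ∈ X, gcdRatio ((y : ℤ) - x).natAbs ((z : ℤ) - x).natAbs ≤
      16 * (U * Real.logb 2 U) := by
  have hlog : 1 + Real.log U ≤ 2 * Real.logb 2 U := by
    linarith [one_le_logb_two hU, log_le_logb_two (one_le_two.trans hU)]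
  calc ∑ y ∈ X, ∑ z ∈ X, gcdRatio ((y : ℤ) - x).natAbs ((z : ℤ) - x).natAbs
      ≤ ∑ y ∈ X, 2 * ∑ e ∈ Ioc 0 U, gcdRatio ((y : ℤ) - x).natAbs e := by
        gcongr with y
        exact sum_natAbs_sub_le hX hx hxX (gcdRatio_nonneg _)
    _ ≤ 2 * ∑ d ∈ Ioc 0 U, 2 * ∑ e ∈ Ioc 0 U, gcdRatio d e :=
        sum_natAbs_sub_le hX hx hxX (f := fun d => 2 * ∑ e ∈ Ioc 0 U, gcdRatio d e) fun d =>
          mul_nonneg zero_le_two (sum_nonneg fun e _ => gcdRatio_nonneg d e)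
    _ ≤ 2 * (2 * (2 * (U * (1 + Real.log U)))) := by
        rw [← mul_sum]
        gcongr
        exact sum_sum_gcdRatio_le U
    _ ≤ 2 * (2 * (2 * (U * (2 * Real.logb 2 U)))) := by gcongr
    _ = 16 * (U * Real.logb 2 U) := by ring

end GcdSums

section FiniteMoments

variable {ι : Type*} {s : Finset ι}

lemma sum_sub_average_sq (hs : s.Nonempty) (f : ι → ℝ) :
    ∑ i ∈ s, (f i - (∑ j ∈ s, f j) / #s) ^ 2 =
      ∑ i ∈ s, f i ^ 2 - #s * ((∑ j ∈ s, f j) / #s) ^ 2 := by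
  have hcard : (#s : ℝ) ≠ 0 := by exact_mod_cast hs.card_pos.ne'
  simp only [sub_sq, sum_add_distrib, sum_sub_distrib, ← sum_mul, ← mul_sum, sum_const,
    nsmul_eq_mul]
  field_simp
  ring

lemma card_filter_le_abs_mul_sq_le (f : ι → ℝ) {t : ℝ} (ht : 0 ≤ t) :
    #{i ∈ s | t ≤ |f i|} * t ^ 2 ≤ ∑ i ∈ s, f i ^ 2 := by
  calc #{i ∈ s | t ≤ |f i|} * t ^ 2 = ∑ i ∈ s with t ≤ |f i|, t ^ 2 := by
        rw [sum_const, nsmul_eq_mul]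
    _ ≤ ∑ i ∈ s with t ≤ |f i|, f i ^ 2 := by
        refine sum_le_sum fun i hi => ?_
        rw [← sq_abs (f i)]
        exact pow_le_pow_left₀ ht (mem_filter.mp hi).2 2
    _ ≤ ∑ i ∈ s, f i ^ 2 :=
        sum_le_sum_of_subset_of_nonneg (filter_subset _ _) fun i _ _ => sq_nonneg (f i)

end FiniteMoments

section ResidueClassCard

/-- The number of `v ∈ [0, p)` in the residue class of `c` modulo `m`, i.e. the number of values
before reduction that land in bucket `c`. -/
def residueClassCard (p m c : ℕ) : ℕ := #{v ∈ range p | v % m = c}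

variable {p m a b c : ℕ}

lemma residueClassCard_mem_Icc (hc : c < m) :
    residueClassCard p m c ∈ Set.Icc (p / m) (p / m + 1) := by
  have hcount : residueClassCard p m c = p.count (· ≡ c [MOD m]) := by
    simp only [residueClassCard, Nat.count_eq_card_filter_range, Nat.ModEq, Nat.mod_eq_of_lt hc]
  rw [hcount, Nat.count_modEq_card _ (by lia), Set.mem_Icc]
  split_ifs <;> lia

lemma residueClassCard_pos (ha : a < m) (hmp : m ≤ p) : 0 < residueClassCard p m a :=
  (Nat.div_pos hmp (by lia)).trans_le (residueClassCard_mem_Icc ha).1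

lemma abs_residueClassCard_div_sub_one_div_le (hp : 0 < p) (hb : b < m) :
    |(residueClassCard p m b / p : ℝ) - 1 / m| ≤ 1 / p := by
  have hp₀ : (0 : ℝ) < p := by exact_mod_cast hp
  have hm₀ : (0 : ℝ) < m := by exact_mod_cast (by lia : 0 < m)
  obtain ⟨hlower, hupper⟩ := residueClassCard_mem_Icc (p := p) hb
  have hround : |(residueClassCard p m b : ℝ) - p / m| ≤ 1 := by
    have hfloor : ((p / m : ℕ) : ℝ) ≤ p / m := Nat.cast_div_le
    have hceil : (p : ℝ) / m < (p / m : ℕ) + 1 := by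
      rw [← Nat.floor_div_eq_div (K := ℝ)]
      exact Nat.lt_floor_add_one _
    have hlowerR : ((p / m : ℕ) : ℝ) ≤ residueClassCard p m b := by exact_mod_cast hlower
    have hupperR : (residueClassCard p m b : ℝ) ≤ (p / m : ℕ) + 1 := by exact_mod_cast hupper
    rw [abs_le]
    constructor <;> linarith
  calc |(residueClassCard p m b / p : ℝ) - 1 / m| = |(residueClassCard p m b : ℝ) - p / m| / p := by
        rw [← abs_of_pos hp₀, ← abs_div, abs_of_pos hp₀]
        congr 1
        field_simp
    _ ≤ 1 / p := by gcongr

lemma cube_sub_residueClassCard_mul_sq_le (ha : a < m) (hb : b < m) :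
    ((p / m + 1 : ℕ) : ℝ) ^ 3 - residueClassCard p m a * residueClassCard p m b ^ 2 ≤
      3 * ((p / m + 1 : ℕ) : ℝ) ^ 2 := by
  have hA : ((p / m : ℕ) : ℝ) ≤ residueClassCard p m a := by
    exact_mod_cast (residueClassCard_mem_Icc ha).1
  have hB : ((p / m : ℕ) : ℝ) ≤ residueClassCard p m b := by
    exact_mod_cast (residueClassCard_mem_Icc hb).1
  have hcube : ((p / m : ℕ) : ℝ) * ((p / m : ℕ) : ℝ) ^ 2 ≤
      residueClassCard p m a * residueClassCard p m b ^ 2 := by gcongr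
  push_cast
  nlinarith [Nat.cast_nonneg (α := ℝ) (p / m)]

lemma sq_mul_cube_div_sub_le {k : ℕ} (hp : 0 < p) (hkp : 4 * k ^ 2 ≤ p) (ha : a < m) (hb : b < m) :
    (k : ℝ) ^ 2 * (((p / m + 1 : ℕ) : ℝ) ^ 3 / p) -
      k ^ 2 * (residueClassCard p m a * residueClassCard p m b ^ 2 / p) ≤
        ((p / m + 1 : ℕ) : ℝ) ^ 2 := by
  have hp₀ : (0 : ℝ) < p := by exact_mod_cast hp
  have hkp' : (k : ℝ) ^ 2 / p ≤ 1 / 4 := by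
    rw [div_le_div_iff₀ hp₀ four_pos]
    exact_mod_cast (by lia : k ^ 2 * 4 ≤ 1 * p)
  set J : ℝ := ((p / m + 1 : ℕ) : ℝ)
  calc (k : ℝ) ^ 2 * (J ^ 3 / p) - k ^ 2 * (residueClassCard p m a * residueClassCard p m b ^ 2 / p)
      = k ^ 2 / p * (J ^ 3 - residueClassCard p m a * residueClassCard p m b ^ 2) := by ring
    _ ≤ k ^ 2 / p * (3 * J ^ 2) := by
        gcongr
        exact cube_sub_residueClassCard_mul_sq_le ha hb
    _ ≤ 1 / 4 * (3 * J ^ 2) := by gcongr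
    _ ≤ J ^ 2 := by linarith [sq_nonneg J]

lemma sq_le_four_mul_residueClassCard_mul (ha : a < m) (hb : b < m) (hmp : m ≤ p) :
    ((p / m + 1 : ℕ) : ℝ) ^ 2 ≤ 4 * (residueClassCard p m a * residueClassCard p m b) := by
  norm_cast
  have hquot : 1 ≤ p / m := Nat.div_pos hmp (by lia)
  calc (p / m + 1) ^ 2 ≤ (2 * (p / m)) ^ 2 := by gcongr; lia
    _ = 4 * (p / m * (p / m)) := by ring
    _ ≤ 4 * (residueClassCard p m a * residueClassCard p m b) := by
        gcongr
        · exact (residueClassCard_mem_Icc ha).1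
        · exact (residueClassCard_mem_Icc hb).1

end ResidueClassCard

section AffineHash

variable {p : ℕ}

lemma natCast_ne_natCast_of_lt {x y : ℕ} (hx : x < p) (hy : y < p) (hxy : x ≠ y) :
    (x : ZMod p) ≠ y :=
  fun h => hxy (CharP.natCast_injOn_Iio (ZMod p) p hx hy h)

lemma natCast_ne_natCast_of_notMem {U x : ℕ} {X : Finset ℕ} (hUp : U ≤ p) (hX : X ⊆ range U)
    (hx : x < U) (hxX : x ∉ X) : ∀ y ∈ X, (x : ZMod p) ≠ y := fun _ hy =>
  natCast_ne_natCast_of_lt (hx.trans_le hUp) ((mem_range.mp (hX hy)).trans_le hUp)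
    (ne_of_mem_of_not_mem hy hxX).symm

/-- The value `(σ v + τ) mod p` of a linear hash function, before it is reduced modulo the number
of buckets. -/
def hashValue (p : ℕ) (στ : ℕ × ℕ) (v : ℕ) : ℕ := (στ.1 * v + στ.2) % p

lemma natCast_hashValue (στ : ℕ × ℕ) (v : ℕ) :
    (hashValue p στ v : ZMod p) = στ.1 * v + στ.2 := by
  rw [hashValue, ZMod.natCast_mod]
  push_cast
  rfl

lemma injOn_hashValue_pair (hp : p.Prime) {x y : ℕ} (hxy : (x : ZMod p) ≠ y) :
    Set.InjOn (fun στ => (hashValue p στ x, hashValue p στ y)) (range p ×ˢ range p : Finset _) := by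
  have := Fact.mk hp
  intro w hw w' hw' h
  simp only [coe_product, coe_range, Set.mem_prod, Set.mem_Iio] at hw hw'
  have hx := congrArg (Nat.cast : ℕ → ZMod p) (congrArg Prod.fst h)
  have hy := congrArg (Nat.cast : ℕ → ZMod p) (congrArg Prod.snd h)
  simp only [natCast_hashValue] at hx hy
  have hσ : (w.1 : ZMod p) = w'.1 :=
    mul_right_cancel₀ (sub_ne_zero.mpr hxy) (by linear_combination hx - hy)
  have hτ : (w.2 : ZMod p) = w'.2 := by linear_combination hx - x * hσ
  exact Prod.ext (CharP.natCast_injOn_Iio (ZMod p) p hw.1 hw'.1 hσ)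
    (CharP.natCast_injOn_Iio (ZMod p) p hw.2 hw'.2 hτ)

lemma card_filter_hashValue_pair (hp : p.Prime) {x y : ℕ} (hxy : (x : ZMod p) ≠ y)
    (P Q : ℕ → Prop) [DecidablePred P] [DecidablePred Q] :
    #{στ ∈ range p ×ˢ range p | P (hashValue p στ x) ∧ Q (hashValue p στ y)} =
      #{u ∈ range p | P u} * #{v ∈ range p | Q v} := by
  set Φ : ℕ × ℕ → ℕ × ℕ := fun στ => (hashValue p στ x, hashValue p στ y)
  have hinj : Set.InjOn Φ (range p ×ˢ range p : Finset _) := injOn_hashValue_pair hp hxy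
  have himage : (range p ×ˢ range p).image Φ = range p ×ˢ range p := by
    refine eq_of_subset_of_card_le (image_subset_iff.mpr fun w _ => ?_)
      (card_image_of_injOn hinj).ge
    exact mk_mem_product (mem_range.mpr (Nat.mod_lt _ hp.pos)) (mem_range.mpr (Nat.mod_lt _ hp.pos))
  rw [← card_product, ← filter_product]
  conv_rhs => rw [← himage, filter_image]
  rw [card_image_of_injOn (hinj.mono (coe_subset.mpr (filter_subset _ _)))]

end AffineHash

section ConditionalEvent

variable {p m a b c x y z : ℕ}

lemma mem_condEvent {στ : ℕ × ℕ} :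
    στ ∈ condEvent p m x a ↔ στ ∈ range p ×ˢ range p ∧ hashValue p στ x % m = a :=
  mem_filter

lemma card_condEvent (hp : p.Prime) :
    #(condEvent p m x a) = residueClassCard p m a * p := by
  have := Fact.mk hp
  have hne : (x : ZMod p) ≠ (x + 1 : ℕ) := by simp
  simpa [condEvent, residueClassCard, hashValue] using
    card_filter_hashValue_pair hp hne (· % m = a) fun _ => True

lemma card_condEvent_filter (hp : p.Prime) (hxy : (x : ZMod p) ≠ y) :
    #{στ ∈ condEvent p m x a | hashValue p στ y % m = b} =
      residueClassCard p m a * residueClassCard p m b := by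
  rw [condEvent, filter_filter]
  exact card_filter_hashValue_pair hp hxy (· % m = a) (· % m = b)

/-- The three hash values satisfy one affine relation modulo `p`, and two of them already determine
`(σ, τ)`; so the event injects into the solutions of that relation among the quotients by `m`. -/
lemma exists_card_condEvent_filter_and_le_collinearCount (hp : p.Prime) (hm : (m : ZMod p) ≠ 0)
    (hxy : (x : ZMod p) ≠ y) {β γ : ℤ} (hcol : (β * (z - x) : ZMod p) = γ * (y - x)) :
    ∃ r, (#{στ ∈ condEvent p m x a | hashValue p στ y % m = b ∧ hashValue p στ z % m = c} : ℝ) ≤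
      collinearCount p β γ (p / m + 1) r := by
  have := Fact.mk hp
  refine ⟨-(m : ZMod p)⁻¹ * ((β - γ) * a + (-β * c + γ * b)), ?_⟩
  rw [collinearCount_eq_card, Nat.cast_le]
  have hsplit (w : ℕ × ℕ) (v : ℕ) : ((hashValue p w v % m : ℕ) : ZMod p) +
      m * (hashValue p w v / m : ℕ) = w.1 * v + w.2 := by
    rw [← natCast_hashValue]
    exact_mod_cast congrArg (Nat.cast : ℕ → ZMod p) (Nat.mod_add_div (hashValue p w v) m)
  have hquot (w : ℕ × ℕ) (v : ℕ) : hashValue p w v / m ∈ range (p / m + 1) :=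
    mem_range.mpr (Nat.lt_succ_of_le (Nat.div_le_div_right (Nat.mod_lt _ hp.pos).le))
  refine card_le_card_of_injOn
    (fun w => (hashValue p w x / m, hashValue p w z / m, hashValue p w y / m))
    (fun w hw => ?_) fun w hw w' hw' h => ?_
  · simp only [coe_filter, mem_condEvent] at hw
    obtain ⟨⟨-, hx⟩, hy, hz⟩ := hw
    have hsx := hsplit w x
    have hsy := hsplit w y
    have hsz := hsplit w z
    rw [hx] at hsx
    rw [hy] at hsy
    rw [hz] at hsz
    refine mem_coe.mpr (mem_filter.mpr ⟨by simp only [mem_product, hquot, and_self], ?_⟩)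
    apply mul_left_cancel₀ hm
    rw [← mul_assoc, mul_neg, mul_inv_cancel₀ hm]
    linear_combination (β - γ) * hsx - β * hsz + γ * hsy - w.1 * hcol
  · simp only [coe_filter, mem_condEvent, Prod.mk.injEq] at hw hw' h
    refine injOn_hashValue_pair hp hxy hw.1.1 hw'.1.1 (Prod.ext ?_ ?_)
    · exact Nat.ext_div_mod h.1 (hw.1.2.trans hw'.1.2.symm)
    · exact Nat.ext_div_mod h.2.2 (hw.2.1.trans hw'.2.1.symm)

lemma card_condEvent_filter_and_le_of_natAbs_le {U : ℕ} (hp : p.Prime) (hUp : 4 * U ^ 2 < p)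
    (hm : 1 ≤ m) (hmU : m ≤ U) (hx : x < U) (hy : y < U) (hxy : x ≠ y)
    (hle : ((z : ℤ) - x).natAbs ≤ ((y : ℤ) - x).natAbs) :
    (#{στ ∈ condEvent p m x a | hashValue p στ y % m = b ∧ hashValue p στ z % m = c} : ℝ) ≤
      ((p / m + 1 : ℕ) : ℝ) ^ 3 / p + 42 * ((p / m + 1 : ℕ) : ℝ) ^ 2 *
        gcdRatio ((y : ℤ) - x).natAbs ((z : ℤ) - x).natAbs := by
  have := NeZero.mk hp.ne_zero
  have hU : U < p := by nlinarith
  have hgcd : 0 < ((y : ℤ) - x).gcd (z - x) := Int.gcd_pos_of_ne_zero_left _ (by lia)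
  obtain ⟨β, γ, hcop, hβ, hγ⟩ := Int.exists_gcd_one hgcd
  set g := ((y : ℤ) - x).gcd (z - x)
  have hβ₀ : β ≠ 0 := by rintro rfl; lia
  have hyβ : ((y : ℤ) - x).natAbs = β.natAbs * g := by rw [hβ, Int.natAbs_mul, Int.natAbs_natCast]
  have hzγ : ((z : ℤ) - x).natAbs = γ.natAbs * g := by rw [hγ, Int.natAbs_mul, Int.natAbs_natCast]
  rw [hyβ, hzγ] at hle ⊢
  have hγβ : γ.natAbs ≤ β.natAbs := Nat.le_of_mul_le_mul_right hle hgcd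
  have hβU : β.natAbs ≤ U := (Nat.le_mul_of_pos_right _ hgcd).trans (by lia)
  have hβp : 3 * β.natAbs ^ 2 ≤ p := by
    have := Nat.pow_le_pow_left hβU 2
    lia
  have hUJ : U ≤ p / m := (Nat.le_div_iff_mul_le hm).mpr (by nlinarith)
  have hcol : (β * (z - x) : ZMod p) = γ * (y - x) := by
    have : β * ((z : ℤ) - x) = γ * (y - x) := by rw [hγ, hβ]; ring
    exact_mod_cast congrArg (Int.cast : ℤ → ZMod p) this
  obtain ⟨r, hr⟩ := exists_card_condEvent_filter_and_le_collinearCount (a := a) (b := b) (c := c) hp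
    (by simpa using natCast_ne_natCast_of_lt (hmU.trans_lt hU) hp.pos (by lia))
    (natCast_ne_natCast_of_lt (hx.trans hU) (hy.trans hU) hxy) hcol
  rw [gcdRatio_mul_right_of_coprime hcop hγβ hgcd, mul_one_div]
  exact hr.trans
    (collinearCount_le hβ₀ (Int.isCoprime_iff_gcd_eq_one.mpr hcop) hγβ hβp (by lia) r)

lemma card_condEvent_filter_and_le {U : ℕ} (hp : p.Prime) (hUp : 4 * U ^ 2 < p) (hm : 1 ≤ m)
    (hmU : m ≤ U) (hx : x < U) (hy : y < U) (hz : z < U) (hxy : x ≠ y) (hxz : x ≠ z) :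
    (#{στ ∈ condEvent p m x a | hashValue p στ y % m = b ∧ hashValue p στ z % m = c} : ℝ) ≤
      ((p / m + 1 : ℕ) : ℝ) ^ 3 / p + 42 * ((p / m + 1 : ℕ) : ℝ) ^ 2 *
        gcdRatio ((y : ℤ) - x).natAbs ((z : ℤ) - x).natAbs := by
  rcases le_total ((z : ℤ) - x).natAbs ((y : ℤ) - x).natAbs with hle | hle
  · exact card_condEvent_filter_and_le_of_natAbs_le hp hUp hm hmU hx hy hxy hle
  · simp only [and_comm (b := hashValue p _ z % m = c)]
    rw [gcdRatio_comm]
    exact card_condEvent_filter_and_le_of_natAbs_le hp hUp hm hmU hx hz hxz hle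

end ConditionalEvent

section Moments

variable {U p m a b x : ℕ} {X : Finset ℕ}

lemma bucketLoad_eq_sum (στ : ℕ × ℕ) :
    bucketLoad p m b X στ = ∑ y ∈ X, if hashValue p στ y % m = b then 1 else 0 :=
  card_filter _ _

lemma sum_bucketLoad (S : Finset (ℕ × ℕ)) :
    ∑ στ ∈ S, bucketLoad p m b X στ = ∑ y ∈ X, #{στ ∈ S | hashValue p στ y % m = b} := by
  simp only [bucketLoad_eq_sum, card_filter]
  exact sum_comm

lemma sum_bucketLoad_sq (S : Finset (ℕ × ℕ)) :
    ∑ στ ∈ S, bucketLoad p m b X στ ^ 2 =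
      ∑ y ∈ X, ∑ z ∈ X, #{στ ∈ S | hashValue p στ y % m = b ∧ hashValue p στ z % m = b} := by
  simp only [bucketLoad_eq_sum, card_filter, sq, sum_mul_sum, ite_and, ite_mul, one_mul, zero_mul]
  rw [sum_comm]
  exact sum_congr rfl fun y _ => sum_comm

lemma sum_condEvent_bucketLoad (hp : p.Prime) (hX : ∀ y ∈ X, (x : ZMod p) ≠ y) :
    ∑ στ ∈ condEvent p m x a, bucketLoad p m b X στ =
      #X * (residueClassCard p m a * residueClassCard p m b) := by
  rw [sum_bucketLoad, sum_congr rfl fun y hy => card_condEvent_filter hp (hX y hy), sum_const,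
    smul_eq_mul]

lemma expLoad_eq (hp : p.Prime) :
    expLoad p m b X = #X * (residueClassCard p m b / p) := by
  have hp₀ : (p : ℝ) ≠ 0 := by exact_mod_cast hp.ne_zero
  have hsum : ∑ στ ∈ range p ×ˢ range p, bucketLoad p m b X στ =
      #X * (residueClassCard p m b * p) := by
    rw [sum_bucketLoad, ← smul_eq_mul, ← sum_const]
    exact sum_congr rfl fun y _ => card_condEvent hp
  rw [expLoad, ← Nat.cast_sum, hsum]
  push_cast
  field_simp

lemma sum_condEvent_bucketLoad_div_card (hp : p.Prime) (ha : a < m) (hmp : m ≤ p)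
    (hX : ∀ y ∈ X, (x : ZMod p) ≠ y) :
    (∑ στ ∈ condEvent p m x a, (bucketLoad p m b X στ : ℝ)) / #(condEvent p m x a) =
      expLoad p m b X := by
  have hp₀ : (p : ℝ) ≠ 0 := by exact_mod_cast hp.ne_zero
  have ha₀ : (residueClassCard p m a : ℝ) ≠ 0 := by exact_mod_cast (residueClassCard_pos ha hmp).ne'
  rw [expLoad_eq hp, ← Nat.cast_sum, sum_condEvent_bucketLoad hp hX, card_condEvent hp]
  push_cast
  field_simp

lemma abs_expLoad_sub_le_one (hp : p.Prime) (hXp : #X ≤ p) (hb : b < m) :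
    |expLoad p m b X - #X / m| ≤ 1 := by
  have hp₀ : (0 : ℝ) < p := by exact_mod_cast hp.pos
  calc |expLoad p m b X - #X / m| = #X * |(residueClassCard p m b / p : ℝ) - 1 / m| := by
        rw [expLoad_eq hp, ← mul_one_div (#X : ℝ) m, ← mul_sub, abs_mul, Nat.abs_cast]
    _ ≤ #X * (1 / p) := by gcongr; exact abs_residueClassCard_div_sub_one_div_le hp.pos hb
    _ ≤ 1 := by
        rw [mul_one_div, div_le_one hp₀]
        exact_mod_cast hXp

lemma card_condEvent_filter_and_le_of_mem (hp : p.Prime) (hUp : 4 * U ^ 2 < p) (hm : 1 ≤ m)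
    (hmU : m ≤ U) (hX : X ⊆ range U) (hx : x < U) (hxX : x ∉ X) {y z : ℕ} (hy : y ∈ X)
    (hz : z ∈ X) :
    (#{στ ∈ condEvent p m x a | hashValue p στ y % m = b ∧ hashValue p στ z % m = b} : ℝ) ≤
      (if y = z then (residueClassCard p m a * residueClassCard p m b : ℝ) else 0) +
        (((p / m + 1 : ℕ) : ℝ) ^ 3 / p + 42 * ((p / m + 1 : ℕ) : ℝ) ^ 2 *
          gcdRatio ((y : ℤ) - x).natAbs ((z : ℤ) - x).natAbs) := by
  have hUp' : U ≤ p := by nlinarith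
  have hne {v : ℕ} (hv : v ∈ X) : x ≠ v := (ne_of_mem_of_not_mem hv hxX).symm
  have hlt {v : ℕ} (hv : v ∈ X) : v < U := mem_range.mp (hX hv)
  have hgcd := gcdRatio_nonneg ((y : ℤ) - x).natAbs ((z : ℤ) - x).natAbs
  split_ifs with hyz
  · subst hyz
    simp only [and_self]
    rw [card_condEvent_filter hp (natCast_ne_natCast_of_notMem hUp' hX hx hxX y hy), Nat.cast_mul]
    exact le_add_of_nonneg_right (by positivity)
  · rw [zero_add]
    exact card_condEvent_filter_and_le hp hUp hm hmU hx (hlt hy) (hlt hz) (hne hy) (hne hz)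

lemma sum_condEvent_bucketLoad_sq_le (hU : 2 ≤ U) (hp : p.Prime) (hUp : 4 * U ^ 2 < p)
    (hm : 1 ≤ m) (hmU : m ≤ U) (hX : X ⊆ range U) (hx : x < U) (hxX : x ∉ X) :
    ∑ στ ∈ condEvent p m x a, (bucketLoad p m b X στ : ℝ) ^ 2 ≤
      #X * (residueClassCard p m a * residueClassCard p m b) +
        (#X ^ 2 * (((p / m + 1 : ℕ) : ℝ) ^ 3 / p) +
          672 * ((p / m + 1 : ℕ) : ℝ) ^ 2 * (U * Real.logb 2 U)) := by
  set J : ℝ := ((p / m + 1 : ℕ) : ℝ)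
  set D : ℕ → ℕ := fun y => ((y : ℤ) - x).natAbs
  calc ∑ στ ∈ condEvent p m x a, (bucketLoad p m b X στ : ℝ) ^ 2
      = ∑ y ∈ X, ∑ z ∈ X, (#{στ ∈ condEvent p m x a |
          hashValue p στ y % m = b ∧ hashValue p στ z % m = b} : ℝ) := by
        exact_mod_cast sum_bucketLoad_sq (condEvent p m x a)
    _ ≤ ∑ y ∈ X, ∑ z ∈ X,
          ((if y = z then (residueClassCard p m a * residueClassCard p m b : ℝ) else 0) +
            (J ^ 3 / p + 42 * J ^ 2 * gcdRatio (D y) (D z))) :=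
        sum_le_sum fun y hy => sum_le_sum fun z hz =>
          card_condEvent_filter_and_le_of_mem hp hUp hm hmU hX hx hxX hy hz
    _ = #X * (residueClassCard p m a * residueClassCard p m b) +
          (#X ^ 2 * (J ^ 3 / p) + 42 * J ^ 2 * ∑ y ∈ X, ∑ z ∈ X, gcdRatio (D y) (D z)) := by
        simp only [sum_add_distrib, sum_ite_eq, ← mul_sum, sum_const, nsmul_eq_mul, sum_ite_mem,
          inter_self]
        ring
    _ ≤ #X * (residueClassCard p m a * residueClassCard p m b) +
          (#X ^ 2 * (J ^ 3 / p) + 42 * J ^ 2 * (16 * (U * Real.logb 2 U))) := by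
        gcongr
        exact sum_sum_gcdRatio_natAbs_sub_le hU hX hx hxX
    _ = _ := by ring

lemma sum_condEvent_bucketLoad_sub_expLoad_sq_eq (hp : p.Prime) (ha : a < m) (hmp : m ≤ p)
    (hX : ∀ y ∈ X, (x : ZMod p) ≠ y) :
    ∑ στ ∈ condEvent p m x a, ((bucketLoad p m b X στ : ℝ) - expLoad p m b X) ^ 2 =
      ∑ στ ∈ condEvent p m x a, (bucketLoad p m b X στ : ℝ) ^ 2 -
        #X ^ 2 * (residueClassCard p m a * residueClassCard p m b ^ 2 / p) := by
  have hp₀ : (p : ℝ) ≠ 0 := by exact_mod_cast hp.ne_zero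
  have hnonempty : (condEvent p m x a).Nonempty := by
    rw [← card_pos, card_condEvent hp]
    exact Nat.mul_pos (residueClassCard_pos ha hmp) hp.pos
  have hvar := sum_sub_average_sq hnonempty fun στ => (bucketLoad p m b X στ : ℝ)
  rw [sum_condEvent_bucketLoad_div_card hp ha hmp hX, card_condEvent hp] at hvar
  rw [hvar, expLoad_eq hp]
  push_cast
  field_simp

lemma sum_condEvent_bucketLoad_sub_expLoad_sq_le (hU : 2 ≤ U) (hp : p.Prime)
    (hUp : 4 * U ^ 2 < p) (hmU : m ≤ U) (hX : X ⊆ range U) (hx : x < U)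
    (hxX : x ∉ X) (ha : a < m) (hb : b < m) :
    ∑ στ ∈ condEvent p m x a, ((bucketLoad p m b X στ : ℝ) - expLoad p m b X) ^ 2 ≤
      2693 * (residueClassCard p m a * residueClassCard p m b) * (U * Real.logb 2 U) := by
  have hUp' : U ≤ p := by nlinarith
  have hkU : #X ≤ U := by simpa using card_le_card hX
  set J : ℝ := ((p / m + 1 : ℕ) : ℝ)
  set A : ℝ := (residueClassCard p m a : ℝ)
  set B : ℝ := (residueClassCard p m b : ℝ)
  set L : ℝ := U * Real.logb 2 U
  have hUL : (U : ℝ) ≤ L := le_mul_of_one_le_right U.cast_nonneg (one_le_logb_two hU)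
  have hU2 : (2 : ℝ) ≤ U := by exact_mod_cast hU
  have hL₀ : 0 ≤ L := by linarith
  have hkL : (#X : ℝ) ≤ L := le_trans (by exact_mod_cast hkU) hUL
  have hAB : J ^ 2 ≤ 4 * (A * B) := sq_le_four_mul_residueClassCard_mul ha hb (hmU.trans hUp')
  have hcube : (#X : ℝ) ^ 2 * (J ^ 3 / p) - #X ^ 2 * (A * B ^ 2 / p) ≤ J ^ 2 * L :=
    (sq_mul_cube_div_sub_le hp.pos (by grw [hkU]; exact hUp.le) ha hb).trans
      (le_mul_of_one_le_right (sq_nonneg J) (by linarith))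
  have hsecond := sum_condEvent_bucketLoad_sq_le (a := a) (b := b) hU hp hUp (by lia) hmU hX hx hxX
  rw [sum_condEvent_bucketLoad_sub_expLoad_sq_eq hp ha (hmU.trans hUp')
    (natCast_ne_natCast_of_notMem hUp' hX hx hxX)]
  calc _ ≤ #X * (A * B) + 673 * (J ^ 2 * L) := by linarith
    _ ≤ L * (A * B) + 673 * (4 * (A * B) * L) := by gcongr
    _ = 2693 * (A * B) * L := by ring

lemma card_condEvent_deviation_div_card_le {lam : ℝ} (hU : 2 ≤ U) (hp : p.Prime)
    (hUp : 4 * U ^ 2 < p) (hmU : m ≤ U) (hX : X ⊆ range U) (hx : x < U)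
    (hxX : x ∉ X) (ha : a < m) (hb : b < m) (hX₀ : X.Nonempty) (hlam : 0 < lam) :
    (#{στ ∈ condEvent p m x a | lam * √(expLoad p m b X) ≤
        |(bucketLoad p m b X στ : ℝ) - expLoad p m b X|} : ℝ) / #(condEvent p m x a) ≤
      2693 * U * Real.logb 2 U / (lam ^ 2 * #X) := by
  have hmp : m ≤ p := by nlinarith
  have hp₀ : (0 : ℝ) < p := by exact_mod_cast hp.pos
  have : (0 : ℝ) < #X := by exact_mod_cast hX₀.card_pos
  have hA₀ : (0 : ℝ) < residueClassCard p m a := by exact_mod_cast residueClassCard_pos ha hmp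
  have hB₀ : (0 : ℝ) < residueClassCard p m b := by exact_mod_cast residueClassCard_pos hb hmp
  have hmean : 0 ≤ expLoad p m b X := by rw [expLoad_eq hp]; positivity
  have hchebyshev := (card_filter_le_abs_mul_sq_le (s := condEvent p m x a)
    (fun στ => (bucketLoad p m b X στ : ℝ) - expLoad p m b X)
    (mul_nonneg hlam.le (Real.sqrt_nonneg (expLoad p m b X)))).trans
      (sum_condEvent_bucketLoad_sub_expLoad_sq_le hU hp hUp hmU hX hx hxX ha hb)
  rw [mul_pow, Real.sq_sqrt hmean] at hchebyshev
  set bad : ℝ := (#{στ ∈ condEvent p m x a | lam * √(expLoad p m b X) ≤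
    |(bucketLoad p m b X στ : ℝ) - expLoad p m b X|} : ℝ)
  rw [expLoad_eq hp] at hchebyshev
  rw [card_condEvent hp, Nat.cast_mul, div_le_div_iff₀ (by positivity) (by positivity)]
  refine le_of_mul_le_mul_right ?_ (div_pos hB₀ hp₀)
  calc bad * (lam ^ 2 * #X) * (residueClassCard p m b / p)
      = bad * (lam ^ 2 * (#X * (residueClassCard p m b / p))) := by ring
    _ ≤ _ := hchebyshev
    _ = 2693 * U * Real.logb 2 U * (residueClassCard p m a * p) * (residueClassCard p m b / p) := by
        field_simp

end Moments

/-- Overfull buckets. There is a universal constant `C` such that: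
for `U ≥ 2`, a set `X ⊆ [U]` of `k ≥ 1` keys, a prime `p > 4U²`, `1 ≤ m ≤ U`, a random
linear hash function `h` with parameters `p, m`, a fixed key `x ∈ [U] \ X`, buckets
`a, b ∈ [m]`, and `F = #{y ∈ X : h(y) = b}`: both `E(F)` and `E(F ∣ h(x) = a)` are within
`C` of `k/m`, and for every `λ > 0`,
`Pr(|F − E(F)| ≥ λ√(E F) ∣ h(x) = a) ≤ C·U·log₂U/(λ²·k)`. -/
theorem stmt_14 : ∃ C : ℝ, ∀ (U k p m x a b : ℕ) (X : Finset ℕ),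
    2 ≤ U → X ⊆ Finset.range U → X.card = k → 1 ≤ k →
    p.Prime → 4 * U ^ 2 < p → 1 ≤ m → m ≤ U →
    x < U → x ∉ X → a < m → b < m →
    abs (expLoad p m b X - (k : ℝ) / m) ≤ C
    ∧ abs ((∑ στ ∈ condEvent p m x a, (bucketLoad p m b X στ : ℝ))
          / ((condEvent p m x a).card : ℝ) - (k : ℝ) / m) ≤ C
    ∧ ∀ lam : ℝ, 0 < lam →
        ((((condEvent p m x a).filter fun στ =>
            lam * Real.sqrt (expLoad p m b X)
              ≤ abs ((bucketLoad p m b X στ : ℝ) - expLoad p m b X)).card : ℝ)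
          / ((condEvent p m x a).card : ℝ))
        ≤ C * U * Real.logb 2 U / (lam ^ 2 * k) := by
  refine ⟨2693, fun U k p m x a b X hU hX hk hk₁ hp hUp _ hmU hx hxX ha hb => ?_⟩
  subst hk
  have hUp' : U ≤ p := by nlinarith
  have hXp : #X ≤ p := (by simpa using card_le_card hX : #X ≤ U).trans hUp'
  have hne : ∀ y ∈ X, (x : ZMod p) ≠ y := natCast_ne_natCast_of_notMem hUp' hX hx hxX
  have hmean : |expLoad p m b X - #X / m| ≤ 2693 :=
    (abs_expLoad_sub_le_one hp hXp hb).trans (by norm_num)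
  refine ⟨hmean, ?_, fun lam hlam => ?_⟩
  · rwa [sum_condEvent_bucketLoad_div_card hp ha (hmU.trans hUp') hne]
  · exact card_condEvent_deviation_div_card_le hU hp hUp hmU hX hx hxX ha hb (card_pos.mp hk₁) hlam
end

section
/- For every constant ε > 0 there exist a constant c > 0 and a threshold k₀ such that the following holds for all integers k ≥ k₀ and U with U ≥ k^{1+ε}: for every prime p > U and every integer m with 1 ≤ m ≤ U, there exist a set X ⊆ {0, …, U−1} of exactly k keys, a key x ∈ {0, …, U−1} with x ∉ X, and buckets a, b ∈ {0, …, m−1} such that, with h a random linear hash function with parameters p and m and y, z ∈ X chosen independently and uniformly at random (independently of h), Pr( h(y) = h(z) = b | h(x) = a ) ≥ (1/(m·k)) · exp( c · √( min( log k / log log k, log U / (log log U)² ) ) ). -/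
/-!
Take `x = 0` and `a = b = 0`. If two keys are `y = g u` and `z = g v` with `u, v ≤ M`, then the
seeds `σ = m t g⁻¹`, `τ = m i` with `t` and `i` small send `y`, `z` and `0` to multiples of `m` that
do not wrap around modulo `p`. Hence `h(y) = h(z) = 0` has conditional probability at least
`1 / (4 m M)`, whatever `p` and `m` are, and it suffices to find `k` keys with many pairs whose
cofactors are small.

The keys are products of half of `r` primes up to `R`, times a factor that only serves to reach `k`
keys. Two of them that differ by exchanging `j` primes have cofactors at most `M = R ^ j`, and each
key has about `(r / 2).choose j ^ 2` such partners. By Chebyshev `r` can be of order `R / log R`, so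
for `j` a small multiple of `√R / log R` the number of partners is at least `(4 R) ^ j`, which beats
`M` by `4 ^ j`. The largest `R` that `k` and `U` leave room for makes `j` a multiple of the square
root in the exponent.
-/

open Finset Filter

/-- The linear hash function `x ↦ ((σ x + τ) mod p) mod m` with seed `w = (σ, τ)`. -/
def linearHash (p m : ℕ) (w : ℕ × ℕ) (x : ℕ) : ℕ := (w.1 * x + w.2) % p % m

/-- The conditional probability `Pr(h(y) = h(z) = b ∣ h(x) = a)` for a random linear hash function
`h` and independent uniform `y, z ∈ X`, as the number of favourable `((σ, τ), (y, z))` over the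
number of those with `h(x) = a`. -/
noncomputable def condCollisionProb (p m : ℕ) (X : Finset ℕ) (x a b : ℕ) : ℝ :=
  #{w ∈ (range p ×ˢ range p) ×ˢ (X ×ˢ X) | linearHash p m w.1 w.2.1 = b ∧
      linearHash p m w.1 w.2.2 = b ∧ linearHash p m w.1 x = a} /
    (#{w ∈ range p ×ˢ range p | linearHash p m w x = a} * (#X : ℝ) ^ 2)

/-- The pairs `(y, z)` of keys in `X` for which both cofactors `y / gcd(y, z)` and `z / gcd(y, z)`
are at most `M`; the bounds are multiplied out to avoid rounding. -/
def smallCofactorPairs (M : ℕ) (X : Finset ℕ) : Finset (ℕ × ℕ) :=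
  {s ∈ X ×ˢ X | s.1 ≤ M * s.1.gcd s.2 ∧ s.2 ≤ M * s.1.gcd s.2}

section Hashing

variable {p m M g : ℕ}

lemma lt_ceilDiv_iff_mul_lt {a b c : ℕ} (hb : 0 < b) : c < a ⌈/⌉ b ↔ b * c < a := by
  rw [← not_le, ceilDiv_le_iff_le_mul hb, not_le]

lemma ceilDiv_le_mul_ceilDiv_mul {a b c : ℕ} (hb : 0 < b) (hc : 0 < c) :
    a ⌈/⌉ b ≤ c * (a ⌈/⌉ (c * b)) := by
  rw [ceilDiv_le_iff_le_mul hb, ← mul_assoc, mul_comm b]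
  exact le_smul_ceilDiv (mul_pos hc hb)

lemma mul_inv_mul_add_mod_eq {e t i u : ℕ} (he : g * e ≡ 1 [MOD p]) (ht : 2 * m * M * t < p)
    (hi : 2 * m * i < p) (hu : u ≤ M) :
    (m * t * e % p * (g * u) + m * i) % p = m * (t * u + i) := by
  have hmod : m * t * e % p * (g * u) + m * i ≡ m * (t * u + i) [MOD p] :=
    calc m * t * e % p * (g * u) + m * i
        ≡ m * t * e * (g * u) + m * i [MOD p] := ((Nat.mod_modEq _ _).mul_right _).add_right _
      _ = m * t * u * (g * e) + m * i := by ring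
      _ ≡ m * t * u * 1 + m * i [MOD p] := (he.mul_left _).add_right _
      _ = m * (t * u + i) := by ring
  have hlt : m * (t * u + i) < p := by
    have : m * t * u ≤ m * t * M := Nat.mul_le_mul_left _ hu
    nlinarith
  rw [hmod, Nat.mod_eq_of_lt hlt]

lemma ceilDiv_mul_ceilDiv_le_card_linearHash_mul_eq_zero (hp : 1 < p) (hm : 0 < m) (hM : 0 < M)
    (hg : g.Coprime p) :
    (p ⌈/⌉ (2 * m * M)) * (p ⌈/⌉ (2 * m)) ≤
      #{w ∈ range p ×ˢ range p | ∀ u ≤ M, linearHash p m w (g * u) = 0} := by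
  obtain ⟨e, -, he⟩ := Nat.exists_mul_mod_eq_one_of_coprime hg hp
  replace he : g * e ≡ 1 [MOD p] := by rw [Nat.ModEq, he, Nat.mod_eq_of_lt hp]
  have hgrid (ti : ℕ × ℕ) : ti ∈ range (p ⌈/⌉ (2 * m * M)) ×ˢ range (p ⌈/⌉ (2 * m)) ↔
      2 * m * M * ti.1 < p ∧ 2 * m * ti.2 < p := by
    rw [mem_product, mem_range, mem_range, lt_ceilDiv_iff_mul_lt (by positivity),
      lt_ceilDiv_iff_mul_lt (by positivity)]
  rw [← card_range (p ⌈/⌉ (2 * m * M)), ← card_range (p ⌈/⌉ (2 * m)), ← card_product]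
  refine card_le_card_of_injOn (fun ti ↦ (m * ti.1 * e % p, m * ti.2)) ?_ ?_
  · rintro ⟨t, i⟩ hti
    obtain ⟨ht, hi⟩ := (hgrid _).1 hti
    refine mem_filter.2 ⟨mem_product.2 ⟨mem_range.2 (Nat.mod_lt _ (by lia)),
      mem_range.2 (by lia)⟩, fun u hu ↦ ?_⟩
    rw [linearHash, mul_inv_mul_add_mod_eq he ht hi hu, Nat.mul_mod_right]
  · rintro ⟨t, i⟩ hti ⟨t', i'⟩ hti' heq
    obtain ⟨ht, hi⟩ := (hgrid _).1 hti
    obtain ⟨ht', hi'⟩ := (hgrid _).1 hti'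
    obtain ⟨hσ, hτ⟩ := Prod.mk.inj heq
    have hval := mul_inv_mul_add_mod_eq he ht hi hM
    rw [hσ, hτ, mul_inv_mul_add_mod_eq he ht' hi' hM] at hval
    have hii' : i = i' := Nat.eq_of_mul_eq_mul_left hm hτ
    have hsum := Nat.eq_of_mul_eq_mul_left hm hval
    exact Prod.ext (by lia) hii'

lemma card_linearHash_zero_eq_zero_le (hm : 0 < m) :
    #{w ∈ range p ×ˢ range p | linearHash p m w 0 = 0} ≤ p * (p ⌈/⌉ m) := by
  calc #{w ∈ range p ×ˢ range p | linearHash p m w 0 = 0}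
      ≤ #(range p ×ˢ (range (p ⌈/⌉ m)).image (m * ·)) := by
        refine card_le_card fun ⟨σ, τ⟩ hw ↦ ?_
        simp only [linearHash, mem_filter, mem_product, mem_range, mul_zero, zero_add] at hw
        obtain ⟨⟨hσ, hτ⟩, hmod⟩ := hw
        rw [Nat.mod_eq_of_lt hτ] at hmod
        obtain ⟨i, rfl⟩ := Nat.dvd_of_mod_eq_zero hmod
        exact mem_product.2 ⟨mem_range.2 hσ,
          mem_image_of_mem _ (mem_range.2 ((lt_ceilDiv_iff_mul_lt hm).2 hτ))⟩
    _ ≤ p * (p ⌈/⌉ m) := by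
        rw [card_product, card_range]
        exact Nat.mul_le_mul_left _ (card_image_le.trans_eq (card_range _))

lemma card_linearHash_zero_eq_zero_le_mul (hp : 1 < p) (hm : 0 < m) (hM : 0 < M)
    (hg : g.Coprime p) :
    #{w ∈ range p ×ˢ range p | linearHash p m w 0 = 0} ≤
      4 * m * M * #{w ∈ range p ×ˢ range p | ∀ u ≤ M, linearHash p m w (g * u) = 0} :=
  calc #{w ∈ range p ×ˢ range p | linearHash p m w 0 = 0}
      ≤ p * (p ⌈/⌉ m) := card_linearHash_zero_eq_zero_le hm
    _ ≤ 2 * m * M * (p ⌈/⌉ (2 * m * M)) * (2 * (p ⌈/⌉ (2 * m))) :=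
        Nat.mul_le_mul (le_smul_ceilDiv (show 0 < 2 * m * M by positivity))
          (ceilDiv_le_mul_ceilDiv_mul hm two_pos)
    _ = 4 * m * M * ((p ⌈/⌉ (2 * m * M)) * (p ⌈/⌉ (2 * m))) := by ring
    _ ≤ _ := Nat.mul_le_mul_left _ (ceilDiv_mul_ceilDiv_le_card_linearHash_mul_eq_zero hp hm hM hg)

lemma card_linearHash_zero_eq_zero_le_mul_card_collision {X : Finset ℕ} {s : ℕ × ℕ} (hp : p.Prime)
    (hm : 0 < m) (hM : 0 < M) (hX : X ⊆ Ico 1 p) (hs : s ∈ smallCofactorPairs M X) :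
    #{w ∈ range p ×ˢ range p | linearHash p m w 0 = 0} ≤
      4 * m * M * #{w ∈ range p ×ˢ range p | linearHash p m w s.1 = 0 ∧ linearHash p m w s.2 = 0 ∧
        linearHash p m w 0 = 0} := by
  obtain ⟨y, z⟩ := s
  obtain ⟨hyz, hy, hz⟩ := mem_filter.1 hs
  dsimp only at hy hz ⊢
  have hyp := mem_Ico.1 (hX (mem_product.1 hyz).1)
  have hgpos : 0 < y.gcd z := Nat.gcd_pos_of_pos_left _ hyp.1
  have hgp : y.gcd z < p := (Nat.gcd_le_left _ hyp.1).trans_lt hyp.2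
  have hcop : (y.gcd z).Coprime p := (Nat.coprime_of_lt_prime hgpos.ne' hgp hp).symm
  obtain ⟨u, hu⟩ := Nat.gcd_dvd_left y z
  obtain ⟨v, hv⟩ := Nat.gcd_dvd_right y z
  have huM : u ≤ M := Nat.le_of_mul_le_mul_left (by rwa [← hu, mul_comm]) hgpos
  have hvM : v ≤ M := Nat.le_of_mul_le_mul_left (by rwa [← hv, mul_comm]) hgpos
  refine (card_linearHash_zero_eq_zero_le_mul hp.one_lt hm hM hcop).trans
    (Nat.mul_le_mul_left _ (card_le_card (monotone_filter_right _ fun w _ hw ↦ ?_)))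
  exact ⟨hu ▸ hw u huM, hv ▸ hw v hvM, hw 0 M.zero_le⟩

lemma card_filter_prodMk_eq_sum {α β : Type*} (W : Finset α) (S : Finset β) (P : α → β → Prop)
    [∀ a b, Decidable (P a b)] :
    #{w ∈ W ×ˢ S | P w.1 w.2} = ∑ s ∈ S, #{w ∈ W | P w s} := by
  simp only [card_filter, sum_product_right]

theorem card_smallCofactorPairs_div_le_condCollisionProb {X : Finset ℕ} (hp : p.Prime)
    (hm : 0 < m) (hM : 0 < M) (hX : X ⊆ Ico 1 p) :
    (#(smallCofactorPairs M X) : ℝ) / (4 * m * M * #X ^ 2) ≤ condCollisionProb p m X 0 0 0 := by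
  set N := #{w ∈ range p ×ˢ range p | linearHash p m w 0 = 0} with hN
  have hNpos : 0 < N := card_pos.2 ⟨(0, 0), by simp [linearHash, hp.pos]⟩
  have hcount : #(smallCofactorPairs M X) * N ≤
      4 * m * M * #{w ∈ (range p ×ˢ range p) ×ˢ (X ×ˢ X) | linearHash p m w.1 w.2.1 = 0 ∧
        linearHash p m w.1 w.2.2 = 0 ∧ linearHash p m w.1 0 = 0} := by
    rw [card_filter_prodMk_eq_sum _ _ fun w (s : ℕ × ℕ) ↦ linearHash p m w s.1 = 0 ∧
      linearHash p m w s.2 = 0 ∧ linearHash p m w 0 = 0, mul_sum, ← smul_eq_mul]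
    exact (card_nsmul_le_sum _ _ _ fun s hs ↦
      card_linearHash_zero_eq_zero_le_mul_card_collision hp hm hM hX hs).trans
      (sum_le_sum_of_subset (filter_subset _ _))
  rcases X.eq_empty_or_nonempty with rfl | hXne
  · simp [condCollisionProb]
  have hXpos : 0 < #X := hXne.card_pos
  rw [condCollisionProb, div_le_div_iff₀ (by positivity) (by positivity), ← hN]
  have hcountR : (_ : ℝ) ≤ _ := Nat.cast_le.2 hcount
  push_cast at hcountR
  linear_combination (#X : ℝ) ^ 2 * hcountR

end Hashing

section Keys

variable {M R K h j k U r : ℕ} {Q A B : Finset ℕ}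

/-- The key `(1 + i ∏ Q) ∏ A` attached to a set `A` of primes from `Q`. The first factor is coprime
to all primes in `Q`, so it provides arbitrarily many keys with the same divisors in `Q`. -/
def primeKey (Q : Finset ℕ) (i : ℕ) (A : Finset ℕ) : ℕ := (1 + i * ∏ q ∈ Q, q) * ∏ q ∈ A, q

lemma prod_pos_of_prime (hQ : ∀ q ∈ Q, q.Prime) : 0 < ∏ q ∈ Q, q :=
  prod_pos fun q hq ↦ (hQ q hq).pos

lemma primeKey_pos (hA : ∀ q ∈ A, q.Prime) (i : ℕ) : 0 < primeKey Q i A :=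
  Nat.mul_pos (by lia) (prod_pos_of_prime hA)

lemma primeKey_mul_prod_sdiff (hBA : B ⊆ A) (i : ℕ) :
    primeKey Q i B * ∏ q ∈ A \ B, q = primeKey Q i A := by
  rw [primeKey, primeKey, mul_assoc, mul_comm (∏ q ∈ B, q), prod_sdiff hBA]

lemma dvd_primeKey_iff_mem (hQ : ∀ q ∈ Q, q.Prime) (hA : A ⊆ Q) {q : ℕ} (hq : q ∈ Q) (i : ℕ) :
    q ∣ primeKey Q i A ↔ q ∈ A := by
  have hq' := hQ q hq
  refine ⟨fun hdvd ↦ ?_, fun hqA ↦ (dvd_prod_of_mem _ hqA).mul_left _⟩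
  rcases hq'.dvd_mul.1 hdvd with hdvd | hdvd
  · have hone : q ∣ 1 := (Nat.dvd_add_left ((dvd_prod_of_mem _ hq).mul_left i)).1 hdvd
    exact absurd (Nat.dvd_one.1 hone) hq'.ne_one
  · obtain ⟨a, ha, hqa⟩ := (hq'.prime.dvd_finsetProd_iff _).1 hdvd
    rwa [(Nat.prime_dvd_prime_iff_eq hq' (hQ a (hA ha))).1 hqa]

lemma primeKey_injOn (hQ : ∀ q ∈ Q, q.Prime) :
    Set.InjOn (fun w : ℕ × Finset ℕ ↦ primeKey Q w.1 w.2) {w | w.2 ⊆ Q} := by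
  rintro ⟨i, A⟩ (hA : A ⊆ Q) ⟨i', A'⟩ (hA' : A' ⊆ Q) (heq : primeKey Q i A = primeKey Q i' A')
  obtain rfl : A = A' := by
    ext q
    by_cases hq : q ∈ Q
    · rw [← dvd_primeKey_iff_mem hQ hA hq i, heq, dvd_primeKey_iff_mem hQ hA' hq i']
    · exact iff_of_false (fun h ↦ hq (hA h)) (fun h ↦ hq (hA' h))
  have hone := Nat.eq_of_mul_eq_mul_right (prod_pos_of_prime fun q hq ↦ hQ q (hA hq)) heq
  have hi := Nat.eq_of_mul_eq_mul_right (prod_pos_of_prime hQ) (Nat.add_left_cancel hone)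
  rw [hi]

lemma primeKey_le (hQ : ∀ q ∈ Q, q.Prime) (hA : A ⊆ Q) (i : ℕ) :
    primeKey Q i A ≤ (i + 1) * (∏ q ∈ Q, q) ^ 2 := by
  have hpos := prod_pos_of_prime hQ
  have hprod : ∏ q ∈ A, q ≤ ∏ q ∈ Q, q :=
    prod_le_prod_of_subset_of_one_le' hA fun q hq _ ↦ (hQ q hq).one_le
  calc primeKey Q i A ≤ ((i + 1) * ∏ q ∈ Q, q) * ∏ q ∈ Q, q := Nat.mul_le_mul (by lia) hprod
    _ = (i + 1) * (∏ q ∈ Q, q) ^ 2 := by ring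

lemma primeKey_le_mul_gcd (hA : ∀ q ∈ A, 0 < q ∧ q ≤ R) (hB : #(A \ B) ≤ j) (hR : 0 < R) (i : ℕ) :
    primeKey Q i A ≤ R ^ j * (primeKey Q i A).gcd (primeKey Q i B) := by
  have hdvd : primeKey Q i (A ∩ B) ∣ (primeKey Q i A).gcd (primeKey Q i B) :=
    Nat.dvd_gcd ⟨_, (primeKey_mul_prod_sdiff inter_subset_left i).symm⟩
      ⟨_, (primeKey_mul_prod_sdiff inter_subset_right i).symm⟩
  have hpos : 0 < (primeKey Q i A).gcd (primeKey Q i B) :=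
    Nat.gcd_pos_of_pos_left _ (Nat.mul_pos (by lia) (prod_pos fun q hq ↦ (hA q hq).1))
  have hprod : ∏ q ∈ A \ B, q ≤ R ^ j :=
    (prod_le_pow_card _ _ _ fun q hq ↦ (hA q (sdiff_subset hq)).2).trans
      (Nat.pow_le_pow_right hR hB)
  calc primeKey Q i A = (∏ q ∈ A \ B, q) * primeKey Q i (A ∩ B) := by
        rw [mul_comm, ← primeKey_mul_prod_sdiff inter_subset_left i, sdiff_inter_self_left]
    _ ≤ R ^ j * (primeKey Q i A).gcd (primeKey Q i B) :=
        Nat.mul_le_mul hprod (Nat.le_of_dvd hpos hdvd)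

-- Removing `C ⊆ A` and adding `D ⊆ Q \ A`, both of size `j`, recovers `C` and `D` as differences.
lemma choose_mul_choose_le_card_sdiff_eq {α : Type*} [DecidableEq α] {Q A : Finset α} {j : ℕ}
    (hA : A ⊆ Q) :
    (#A).choose j * (#Q - #A).choose j ≤ #{B ∈ powersetCard #A Q | #(A \ B) = j} := by
  rw [← card_sdiff_of_subset hA, ← card_powersetCard, ← card_powersetCard, ← card_product]
  have hrecover {C D : Finset α} (hC : C ⊆ A) (hD : D ⊆ Q \ A) :
      A \ ((A \ C) ∪ D) = C ∧ ((A \ C) ∪ D) \ A = D := by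
    constructor <;> ext q <;> grind
  refine card_le_card_of_injOn (fun CD ↦ (A \ CD.1) ∪ CD.2) ?_ ?_
  · rintro ⟨C, D⟩ hCD
    simp only [coe_product, Set.mem_prod, mem_coe, mem_powersetCard] at hCD
    obtain ⟨⟨hC, hCj⟩, hD, hDj⟩ := hCD
    have hdisj : Disjoint (A \ C) D := disjoint_sdiff.mono sdiff_subset hD
    have hjA : j ≤ #A := hCj ▸ card_le_card hC
    refine mem_filter.2 ⟨mem_powersetCard.2 ⟨union_subset (sdiff_subset.trans hA)
      (hD.trans sdiff_subset), ?_⟩, by rw [(hrecover hC hD).1, hCj]⟩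
    rw [card_union_of_disjoint hdisj, card_sdiff_of_subset hC, hCj, hDj, Nat.sub_add_cancel hjA]
  · rintro ⟨C, D⟩ hCD ⟨C', D'⟩ hCD' heq
    simp only [coe_product, Set.mem_prod, mem_coe, mem_powersetCard] at hCD hCD' heq
    have hCC' := hrecover hCD.1.1 hCD.2.1
    rw [heq, (hrecover hCD'.1.1 hCD'.2.1).1, (hrecover hCD'.1.1 hCD'.2.1).2] at hCC'
    exact Prod.ext hCC'.1.symm hCC'.2.symm

/-- The keys `primeKey Q i A` with `i < K` and `A` ranging over the `h`-element subsets of `Q`. -/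
def primeKeys (Q : Finset ℕ) (K h : ℕ) : Finset ℕ :=
  (range K ×ˢ powersetCard h Q).image fun w ↦ primeKey Q w.1 w.2

lemma mem_primeKeys {y : ℕ} :
    y ∈ primeKeys Q K h ↔ ∃ i A, i < K ∧ (A ⊆ Q ∧ #A = h) ∧ primeKey Q i A = y := by
  simp [primeKeys, and_assoc]

lemma card_primeKeys (hQ : ∀ q ∈ Q, q.Prime) : #(primeKeys Q K h) = K * (#Q).choose h := by
  rw [primeKeys, card_image_of_injOn, card_product, card_range, card_powersetCard]
  exact (primeKey_injOn hQ).mono fun w hw ↦ (mem_powersetCard.1 (mem_product.1 hw).2).1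

lemma primeKeys_subset_Icc (hQ : ∀ q ∈ Q, q.Prime) :
    primeKeys Q K h ⊆ Icc 1 (K * (∏ q ∈ Q, q) ^ 2) := by
  intro y hy
  obtain ⟨i, A, hi, ⟨hA, -⟩, rfl⟩ := mem_primeKeys.1 hy
  exact mem_Icc.2 ⟨primeKey_pos (fun q hq ↦ hQ q (hA hq)) i,
    (primeKey_le hQ hA i).trans (Nat.mul_le_mul_right _ hi)⟩

lemma smallCofactorPairs_subset {X Y : Finset ℕ} (hXY : X ⊆ Y) :
    smallCofactorPairs M X ⊆ smallCofactorPairs M Y :=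
  filter_subset_filter _ (product_subset_product hXY hXY)

-- Each key `primeKey Q i A` is paired with the keys `primeKey Q i B` where `B` differs from `A` in
-- `j` primes.
lemma choose_mul_choose_le_card_filter_le_mul_gcd (hQ : ∀ q ∈ Q, q.Prime ∧ q ≤ R) (hR : 0 < R)
    {y : ℕ} (hy : y ∈ primeKeys Q K h) :
    h.choose j * (#Q - h).choose j ≤
      #{z ∈ primeKeys Q K h | y ≤ R ^ j * y.gcd z ∧ z ≤ R ^ j * y.gcd z} := by
  obtain ⟨i, A, hi, ⟨hA, rfl⟩, rfl⟩ := mem_primeKeys.1 hy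
  refine (choose_mul_choose_le_card_sdiff_eq hA).trans
    (card_le_card_of_injOn (primeKey Q i) (fun B hB ↦ ?_) fun B hB B' hB' heq ↦ ?_)
  · obtain ⟨hBQ, hAB⟩ := mem_filter.1 hB
    obtain ⟨hBQ, hBA⟩ := mem_powersetCard.1 hBQ
    have hbound {C : Finset ℕ} (hC : C ⊆ Q) : ∀ q ∈ C, 0 < q ∧ q ≤ R :=
      fun q hq ↦ ⟨(hQ q (hC hq)).1.pos, (hQ q (hC hq)).2⟩
    have hBA' : #(B \ A) ≤ j := by rw [card_sdiff_comm hBA, hAB]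
    refine mem_filter.2 ⟨mem_primeKeys.2 ⟨i, B, hi, ⟨hBQ, hBA⟩, rfl⟩,
      primeKey_le_mul_gcd (hbound hA) hAB.le hR i, ?_⟩
    rw [Nat.gcd_comm]
    exact primeKey_le_mul_gcd (hbound hBQ) hBA' hR i
  · have hsub {C : Finset ℕ} (hC : C ∈ {B ∈ powersetCard #A Q | #(A \ B) = j}) : C ⊆ Q :=
      (mem_powersetCard.1 (mem_filter.1 hC).1).1
    exact congrArg Prod.snd (primeKey_injOn (fun q hq ↦ (hQ q hq).1)
      (x₁ := (i, B)) (x₂ := (i, B')) (hsub hB) (hsub hB') heq)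

lemma card_primeKeys_mul_le_card_smallCofactorPairs (hQ : ∀ q ∈ Q, q.Prime ∧ q ≤ R) (hR : 0 < R) :
    #(primeKeys Q K h) * (h.choose j * (#Q - h).choose j) ≤
      #(smallCofactorPairs (R ^ j) (primeKeys Q K h)) := by
  rw [smallCofactorPairs, card_filter, sum_product, ← smul_eq_mul]
  simp only [← card_filter]
  exact card_nsmul_le_sum _ _ _ fun y hy ↦ choose_mul_choose_le_card_filter_le_mul_gcd hQ hR hy

lemma pow_le_choose_of_mul_le {s n j : ℕ} (hsn : s * j ≤ n) : s ^ j ≤ n.choose j := by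
  induction j generalizing n with
  | zero => simp
  | succ j ih =>
    rcases s.eq_zero_or_pos with rfl | hs
    · simp
    obtain ⟨n, rfl⟩ : ∃ n', n = n' + 1 := Nat.exists_eq_add_one.2 (by nlinarith)
    refine Nat.le_of_mul_le_mul_right ?_ j.succ_pos
    calc s ^ (j + 1) * (j + 1) = s * (j + 1) * s ^ j := by ring
      _ ≤ (n + 1) * n.choose j := Nat.mul_le_mul hsn (ih (by nlinarith))
      _ = (n + 1).choose (j + 1) * (j + 1) := Nat.add_one_mul_choose_eq n j

lemma pow_four_mul_le_choose_mul_choose (hj : 4 * (Nat.sqrt R + 1) * j ≤ r) :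
    (4 * R) ^ j ≤ (r / 2).choose j * (r - r / 2).choose j := by
  have hR : 4 * R ≤ (2 * (Nat.sqrt R + 1)) * (2 * (Nat.sqrt R + 1)) := by
    nlinarith [Nat.lt_succ_sqrt R]
  calc (4 * R) ^ j ≤ (2 * (Nat.sqrt R + 1)) ^ j * (2 * (Nat.sqrt R + 1)) ^ j := by
        rw [← mul_pow]
        exact Nat.pow_le_pow_left hR j
    _ ≤ (r / 2).choose j * (r - r / 2).choose j :=
        Nat.mul_le_mul (pow_le_choose_of_mul_le (by lia)) (pow_le_choose_of_mul_le (by lia))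

lemma exists_primes_card_eq (hr : r ≤ Nat.primeCounting R) :
    ∃ Q : Finset ℕ, (∀ q ∈ Q, q.Prime ∧ q ≤ R) ∧ #Q = r ∧ ∏ q ∈ Q, q ≤ 4 ^ R := by
  rw [← Nat.primesLE_card_eq_primeCounting] at hr
  obtain ⟨Q, hQ, hQr⟩ := exists_subset_card_eq hr
  refine ⟨Q, fun q hq ↦ (Nat.mem_primesLE.1 (hQ hq)).symm, hQr, ?_⟩
  calc ∏ q ∈ Q, q ≤ primorial R := prod_le_prod_of_subset_of_one_le' hQ
        fun q hq _ ↦ (Nat.one_lt_of_mem_primesLE hq).le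
    _ ≤ 4 ^ R := primorial_le_four_pow R

theorem exists_keys_card_smallCofactorPairs_ge (hR : 0 < R) (hr : r ≤ Nat.primeCounting R)
    (hrk : 2 ^ r ≤ k) (hkU : k * 16 ^ R < U) (hj : 4 * (Nat.sqrt R + 1) * j ≤ r) :
    ∃ X ⊆ Ico 1 U, #X = k ∧ k * (4 * R) ^ j ≤ 2 * #(smallCofactorPairs (R ^ j) X) := by
  obtain ⟨Q, hQ, rfl, hQprod⟩ := exists_primes_card_eq hr
  set C := (#Q).choose (#Q / 2)
  have hCpos : 0 < C := Nat.choose_pos (by lia)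
  have hKpos : 0 < k / C := Nat.div_pos ((Nat.choose_le_two_pow _ _).trans hrk) hCpos
  set Y := primeKeys Q (k / C) (#Q / 2)
  have hYcard : #Y = k / C * C := card_primeKeys fun q hq ↦ (hQ q hq).1
  have hYsub : Y ⊆ Ico 1 U := by
    refine (primeKeys_subset_Icc fun q hq ↦ (hQ q hq).1).trans fun y hy ↦ ?_
    obtain ⟨hy1, hyle⟩ := mem_Icc.1 hy
    refine mem_Ico.2 ⟨hy1, hyle.trans_lt (lt_of_le_of_lt ?_ hkU)⟩
    calc k / C * (∏ q ∈ Q, q) ^ 2 ≤ k * (4 ^ R) ^ 2 :=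
          Nat.mul_le_mul (Nat.div_le_self _ _) (Nat.pow_le_pow_left hQprod 2)
      _ = k * 16 ^ R := by rw [pow_right_comm]; norm_num
  have hkU' : k < U := (Nat.le_mul_of_pos_right k (by positivity)).trans_lt hkU
  obtain ⟨X, hYX, hXU, hXcard⟩ := exists_subsuperset_card_eq hYsub (n := k)
    (hYcard.trans_le (Nat.div_mul_le_self k C)) (by rw [Nat.card_Ico]; lia)
  refine ⟨X, hXU, hXcard, ?_⟩
  have hk : k ≤ 2 * #Y := by
    have := Nat.lt_div_mul_add (a := k) hCpos
    have : C ≤ k / C * C := Nat.le_mul_of_pos_left C hKpos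
    lia
  calc k * (4 * R) ^ j
      ≤ 2 * #Y * ((#Q / 2).choose j * (#Q - #Q / 2).choose j) :=
        Nat.mul_le_mul hk (pow_four_mul_le_choose_mul_choose hj)
    _ ≤ 2 * #(smallCofactorPairs (R ^ j) X) := by
        rw [mul_assoc]
        exact Nat.mul_le_mul_left _ ((card_primeKeys_mul_le_card_smallCofactorPairs hQ hR).trans
          (card_le_card (smallCofactorPairs_subset hYX)))

end Keys

section Parameters

variable {L V δ x : ℝ} {k U R j : ℕ}

/-- The quantity `min (log k / log log k) (log U / (log log U)²)` as a function of `L = log k` and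
`V = log U`; its square root governs the exponent of the lower bound. -/
noncomputable def collisionExponent (L V : ℝ) : ℝ :=
  min (L / Real.logb 2 L) (V / Real.logb 2 V ^ 2)

lemma one_le_logb_two_s15 (hx : 2 ≤ x) : 1 ≤ Real.logb 2 x := by
  rwa [Real.le_logb_iff_rpow_le one_lt_two (by linarith), Real.rpow_one]

lemma logb_two_le_self (hx : 1 ≤ x) : Real.logb 2 x ≤ x := by
  rw [Real.logb_le_iff_le_rpow one_lt_two (by linarith)]
  have bernoulli := one_add_mul_self_le_rpow_one_add (s := 1) (by norm_num) hx
  norm_num at bernoulli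
  linarith

lemma tendsto_div_logb_sq_atTop {b : ℝ} (hb : 1 < b) :
    Tendsto (fun x ↦ x / Real.logb b x ^ 2) atTop atTop := by
  have hlog : 0 < Real.log b ^ 2 := by have := Real.log_pos hb; positivity
  refine (((Real.tendsto_exp_div_pow_atTop 2).comp Real.tendsto_log_atTop).const_mul_atTop
    hlog).congr' ?_
  filter_upwards [eventually_gt_atTop 0] with x hx
  simp only [Function.comp_apply, Real.exp_log hx, Real.logb]
  field_simp

lemma exists_forall_le_collisionExponent (c : ℝ) :
    ∃ L₀, ∀ L V, L₀ ≤ L → L ≤ V → c ≤ collisionExponent L V := by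
  obtain ⟨L₀, hL₀⟩ := eventually_atTop.1
    ((tendsto_div_logb_sq_atTop one_lt_two).eventually_ge_atTop c)
  refine ⟨max L₀ 2, fun L V hL hLV ↦ le_min ?_ (hL₀ V ((le_of_max_le_left hL).trans hLV))⟩
  have hlog := one_le_logb_two_s15 (le_of_max_le_right hL)
  refine (hL₀ L (le_of_max_le_left hL)).trans ?_
  gcongr
  · linarith [le_of_max_le_right hL]
  · exact le_self_pow₀ hlog two_ne_zero

lemma collisionExponent_mul_logb_le (hL : 2 ≤ L) (hx : 1 ≤ collisionExponent L V) :
    collisionExponent L V * Real.logb 2 (collisionExponent L V) ≤ L := by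
  set x := collisionExponent L V
  have hlog := one_le_logb_two_s15 hL
  have hxL : x ≤ L / Real.logb 2 L := min_le_left _ _
  have hxL' : x ≤ L := hxL.trans (div_le_self (by linarith) hlog)
  have hlogx : 0 ≤ Real.logb 2 x := Real.logb_nonneg one_lt_two hx
  calc x * Real.logb 2 x ≤ L / Real.logb 2 L * Real.logb 2 L := by
        gcongr
        exact one_lt_two
    _ = L := div_mul_cancel₀ _ (by linarith)

lemma collisionExponent_mul_logb_sq_le (hV : 2 ≤ V) (hx : 1 ≤ collisionExponent L V) :
    collisionExponent L V * Real.logb 2 (collisionExponent L V) ^ 2 ≤ V := by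
  set x := collisionExponent L V
  have hlog := one_le_logb_two_s15 hV
  have hxV : x ≤ V / Real.logb 2 V ^ 2 := min_le_right _ _
  have hxV' : x ≤ V := hxV.trans (div_le_self (by linarith) (one_le_pow₀ hlog))
  have hlogx : 0 ≤ Real.logb 2 x := Real.logb_nonneg one_lt_two hx
  calc x * Real.logb 2 x ^ 2 ≤ V / Real.logb 2 V ^ 2 * Real.logb 2 V ^ 2 := by
        gcongr
        exact one_lt_two
    _ = V := div_mul_cancel₀ _ (by positivity)

lemma div_two_mul_logb_le_primeCounting (hR : 16 ≤ R) :
    (R : ℝ) / (2 * Real.logb 2 R) ≤ Nat.primeCounting R := by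
  have hsq : (R + 1) ^ 2 ≤ 2 ^ R := by
    induction R, hR using Nat.le_induction with
    | base => norm_num
    | succ n hn ih => rw [pow_succ 2]; nlinarith
  have hlog : 2 * Real.log (R + 1) ≤ R * Real.log 2 := by
    rw [← Real.log_pow, ← Nat.cast_ofNat, ← Real.log_pow]
    exact Real.log_le_log (by positivity) (by exact_mod_cast hsq)
  have hlogR : 0 < Real.log R := Real.log_pos (by exact_mod_cast (by lia : 1 < R))
  calc (R : ℝ) / (2 * Real.logb 2 R) = R * Real.log 2 / 2 / Real.log R := by
        rw [Real.logb]
        field_simp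
    _ ≤ (R * Real.log 2 - Real.log (R + 1)) / Real.log R := by
        gcongr
        linarith
    _ ≤ Nat.primeCounting R := Chebyshev.pi_ge R

lemma floor_mul_logb_div_le_primeCounting (hδ : δ ≤ 1) (hx : 2 ≤ x) (hδx : 32 ≤ δ * x) :
    ⌊δ * x * Real.logb 2 x / 12⌋₊ ≤ Nat.primeCounting ⌊δ * x * Real.logb 2 x ^ 2⌋₊ := by
  set ℓ := Real.logb 2 x
  set R := ⌊δ * x * ℓ ^ 2⌋₊
  have hℓ : 1 ≤ ℓ := one_le_logb_two_s15 hx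
  have hℓx : ℓ ≤ x := logb_two_le_self (by linarith)
  have hbig : 32 ≤ δ * x * ℓ ^ 2 := by nlinarith
  have hRle : (R : ℝ) ≤ δ * x * ℓ ^ 2 := Nat.floor_le (by linarith)
  have hRge : δ * x * ℓ ^ 2 / 2 ≤ R := by linarith [Nat.lt_floor_add_one (δ * x * ℓ ^ 2)]
  have hR16 : (16 : ℝ) ≤ R := by linarith
  have hlogR : Real.logb 2 R ≤ 3 * ℓ := by
    have hRx : (R : ℝ) ≤ x ^ 3 := by
      calc (R : ℝ) ≤ 1 * x * x ^ 2 := hRle.trans (by gcongr)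
        _ = x ^ 3 := by ring
    have := Real.logb_le_logb_of_le one_lt_two (by linarith) hRx
    rwa [Real.logb_pow] at this
  have hlogR' : 0 < Real.logb 2 R := Real.logb_pos one_lt_two (by linarith)
  refine Nat.floor_le_of_le ((?_ : _ ≤ (R : ℝ) / (2 * Real.logb 2 R)).trans
    (div_two_mul_logb_le_primeCounting (by exact_mod_cast hR16)))
  calc δ * x * ℓ / 12 = δ * x * ℓ ^ 2 / 2 / (2 * (3 * ℓ)) := by
        field_simp
        ring
    _ ≤ R / (2 * Real.logb 2 R) := by gcongr

lemma mul_floor_sqrt_div_le_floor (hδ₀ : 0 < δ) (hδ : δ ≤ 1) (hx : 2 ≤ x) :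
    4 * (Nat.sqrt ⌊δ * x * Real.logb 2 x ^ 2⌋₊ + 1) * ⌊δ * √x / 96⌋₊ ≤
      ⌊δ * x * Real.logb 2 x / 12⌋₊ := by
  set ℓ := Real.logb 2 x
  have hℓ : 1 ≤ ℓ := one_le_logb_two_s15 hx
  have hsqrtx : 1 ≤ √x := Real.one_le_sqrt.2 (by linarith)
  have hsqrt : (Nat.sqrt ⌊δ * x * ℓ ^ 2⌋₊ : ℝ) ≤ √x * ℓ := by
    refine Real.nat_sqrt_le_real_sqrt.trans (Real.sqrt_le_iff.2 ⟨by positivity, ?_⟩)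
    calc (⌊δ * x * ℓ ^ 2⌋₊ : ℝ) ≤ δ * x * ℓ ^ 2 := Nat.floor_le (by positivity)
      _ ≤ 1 * x * ℓ ^ 2 := by gcongr
      _ = (√x * ℓ) ^ 2 := by rw [mul_pow, Real.sq_sqrt (by linarith), one_mul]
  refine Nat.le_floor ?_
  push_cast
  calc 4 * ((Nat.sqrt ⌊δ * x * ℓ ^ 2⌋₊ : ℝ) + 1) * ⌊δ * √x / 96⌋₊
      ≤ 4 * (√x * ℓ + √x * ℓ) * (δ * √x / 96) := by
        gcongr
        · exact one_le_mul_of_one_le_of_one_le hsqrtx hℓ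
        · exact Nat.floor_le (by positivity)
    _ = δ * (√x * √x) * ℓ / 12 := by ring
    _ = δ * x * ℓ / 12 := by rw [Real.mul_self_sqrt (by linarith)]

lemma exp_half_le_four_pow_floor_div {y : ℝ} (hy : 8 ≤ y) : Real.exp (y / 2) ≤ 4 ^ ⌊y⌋₊ / 8 := by
  have hexp : Real.exp 1 ≤ 4 := by linarith [Real.exp_one_lt_d9]
  have hexp3 : 8 ≤ Real.exp 3 := by
    calc (8 : ℝ) = 2 ^ 3 := by norm_num
      _ ≤ Real.exp 1 ^ 3 := by gcongr; linarith [Real.exp_one_gt_d9]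
      _ = Real.exp 3 := by rw [← Real.exp_nat_mul]; norm_num
  rw [le_div_iff₀ (by norm_num)]
  calc Real.exp (y / 2) * 8 ≤ Real.exp (y / 2) * Real.exp 3 := by gcongr
    _ = Real.exp (y / 2 + 3) := (Real.exp_add _ _).symm
    _ ≤ Real.exp ⌊y⌋₊ := Real.exp_le_exp.2 (by linarith [Nat.lt_floor_add_one y])
    _ = Real.exp 1 ^ ⌊y⌋₊ := by rw [← Real.exp_nat_mul, mul_one]
    _ ≤ 4 ^ ⌊y⌋₊ := by gcongr

lemma two_pow_le_of_le_logb (hk : 0 < k) (hj : (j : ℝ) ≤ Real.logb 2 k) : 2 ^ j ≤ k := by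
  rw [Real.le_logb_iff_rpow_le one_lt_two (by exact_mod_cast hk), Real.rpow_natCast] at hj
  exact_mod_cast hj

lemma mul_sixteen_pow_lt_of_logb (hk : 0 < k) (hU : 0 < U)
    (h : Real.logb 2 k + 4 * R < Real.logb 2 U) : k * 16 ^ R < U := by
  have hlog : Real.logb 2 ((k * 16 ^ R : ℕ) : ℝ) = Real.logb 2 k + 4 * R := by
    have h16 : Real.logb 2 16 = 4 := by
      rw [show (16 : ℝ) = 2 ^ (4 : ℕ) by norm_num, Real.logb_pow]
      norm_num
    push_cast
    rw [Real.logb_mul (by positivity) (by positivity), Real.logb_pow, h16, mul_comm (R : ℝ)]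
  rw [← hlog, Real.logb_lt_logb_iff one_lt_two (by positivity) (by positivity)] at h
  exact_mod_cast h

end Parameters

section LowerBound

variable {δ : ℝ} {k U R j p m : ℕ} {X : Finset ℕ}

lemma four_pow_div_le_condCollisionProb (hp : p.Prime) (hm : 0 < m) (hR : 0 < R)
    (hXp : X ⊆ Ico 1 p) (hX : 0 < #X)
    (hpairs : #X * (4 * R) ^ j ≤ 2 * #(smallCofactorPairs (R ^ j) X)) :
    1 / ((m : ℝ) * #X) * (4 ^ j / 8) ≤ condCollisionProb p m X 0 0 0 := by
  have hpairs' : (#X : ℝ) * (4 * R) ^ j ≤ 2 * #(smallCofactorPairs (R ^ j) X) := by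
    exact_mod_cast hpairs
  calc 1 / ((m : ℝ) * #X) * (4 ^ j / 8)
      = #X * (4 * R) ^ j / 2 / (4 * m * (R ^ j : ℕ) * #X ^ 2) := by
        push_cast
        rw [mul_pow]
        field_simp
        norm_num
    _ ≤ #(smallCofactorPairs (R ^ j) X) / (4 * m * (R ^ j : ℕ) * #X ^ 2) := by
        gcongr
        linarith
    _ ≤ condCollisionProb p m X 0 0 0 :=
        card_smallCofactorPairs_div_le_condCollisionProb hp hm (by positivity) hXp

-- With `x = collisionExponent (log k) (log U)` and `ℓ = log x`, the primes are those up to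
-- `R = δ x ℓ²`, of which `r = δ x ℓ / 12` are used, and `j = δ √x / 96` of them are exchanged. The
-- bound `x ℓ ≤ log k` leaves room for the `2 ^ r` subsets, `x ℓ² ≤ log U` for the size of the keys.
lemma exists_keys_of_le_mul_sqrt_collisionExponent (hδ₀ : 0 < δ) (hδ : δ ≤ 1)
    (hk : 2 ≤ Real.logb 2 k)
    (hkU : Real.logb 2 k + 4 * (δ * Real.logb 2 U) < Real.logb 2 U)
    (hx : 768 ≤ δ * √(collisionExponent (Real.logb 2 k) (Real.logb 2 U))) :
    ∃ X ⊆ Ico 1 U, #X = k ∧ ∃ R j, 0 < R ∧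
      Real.exp (δ / 192 * √(collisionExponent (Real.logb 2 k) (Real.logb 2 U))) ≤ 4 ^ j / 8 ∧
      k * (4 * R) ^ j ≤ 2 * #(smallCofactorPairs (R ^ j) X) := by
  set L := Real.logb 2 k
  set V := Real.logb 2 U
  set x := collisionExponent L V
  set ℓ := Real.logb 2 x
  have hV₀ : 0 ≤ V := div_nonneg (Real.log_natCast_nonneg U) (Real.log_nonneg one_le_two)
  have hV : 2 ≤ V := by nlinarith
  have hkpos : 0 < k := Nat.pos_of_ne_zero fun h ↦ by norm_num [L, h] at hk
  have hUpos : 0 < U := Nat.pos_of_ne_zero fun h ↦ by norm_num [V, h] at hV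
  have hsqrt : 768 ≤ √x := hx.trans (mul_le_of_le_one_left (Real.sqrt_nonneg x) hδ)
  have hsq : √x * √x = x := Real.mul_self_sqrt (Real.sqrt_pos.1 (by linarith)).le
  have hx₂ : 2 ≤ x := by nlinarith
  have hδx : 32 ≤ δ * x := by rw [← hsq]; nlinarith
  have hℓ : 1 ≤ ℓ := one_le_logb_two_s15 hx₂
  have hxL : x * ℓ ≤ L := collisionExponent_mul_logb_le hk (by linarith)
  have hxV : x * ℓ ^ 2 ≤ V := collisionExponent_mul_logb_sq_le hV (by linarith)
  have hR : 0 < ⌊δ * x * ℓ ^ 2⌋₊ := Nat.floor_pos.2 (by nlinarith)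
  have hr : (⌊δ * x * ℓ / 12⌋₊ : ℝ) ≤ L := (Nat.floor_le (by positivity)).trans (by nlinarith)
  have hRV : (⌊δ * x * ℓ ^ 2⌋₊ : ℝ) ≤ δ * V := (Nat.floor_le (by positivity)).trans (by nlinarith)
  obtain ⟨X, hXU, hXk, hpairs⟩ := exists_keys_card_smallCofactorPairs_ge hR
    (floor_mul_logb_div_le_primeCounting hδ hx₂ hδx) (two_pow_le_of_le_logb hkpos hr)
    (mul_sixteen_pow_lt_of_logb hkpos hUpos (by linarith)) (mul_floor_sqrt_div_le_floor hδ₀ hδ hx₂)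
  refine ⟨X, hXU, hXk, _, _, hR, ?_, hpairs⟩
  convert exp_half_le_four_pow_floor_div (y := δ * √x / 96) (by linarith) using 2
  ring

lemma exists_forall_two_le_logb_and_le_mul_sqrt_collisionExponent (hδ : 0 < δ) (c : ℝ) :
    ∃ k₀ : ℕ, ∀ k ≥ k₀, 2 ≤ Real.logb 2 k ∧ ∀ V, Real.logb 2 k ≤ V →
      c ≤ δ * √(collisionExponent (Real.logb 2 k) V) := by
  obtain ⟨L₀, hL₀⟩ := exists_forall_le_collisionExponent ((c / δ) ^ 2)
  have hlog : Tendsto (fun k : ℕ ↦ Real.logb 2 k) atTop atTop :=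
    (Real.tendsto_logb_atTop one_lt_two).comp tendsto_natCast_atTop_atTop
  obtain ⟨k₀, hk₀⟩ := eventually_atTop.1
    ((hlog.eventually_ge_atTop 2).and (hlog.eventually_ge_atTop L₀))
  refine ⟨k₀, fun k hk ↦ ⟨(hk₀ k hk).1, fun V hV ↦ ?_⟩⟩
  rw [← div_le_iff₀' hδ]
  exact Real.le_sqrt_of_sq_le (hL₀ _ V (hk₀ k hk).2 hV)

end LowerBound

theorem stmt_15_general {ε : ℝ} (hε : 0 < ε) :
    ∃ c : ℝ, 0 < c ∧ ∃ k₀ : ℕ, ∀ k ≥ k₀, ∀ U : ℕ, (k : ℝ) ^ (1 + ε) ≤ U →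
      ∃ X ⊆ Ico 1 U, #X = k ∧ ∀ p, p.Prime → U ≤ p → ∀ m : ℕ, 1 ≤ m →
        1 / ((m : ℝ) * k) *
            Real.exp (c * √(collisionExponent (Real.logb 2 k) (Real.logb 2 U))) ≤
          condCollisionProb p m X 0 0 0 := by
  set δ := ε / (8 * (1 + ε)) with hδ
  have hδ₀ : 0 < δ := by positivity
  have hδ₁ : δ ≤ 1 := (div_le_one₀ (by positivity)).2 (by linarith)
  obtain ⟨k₀, hk₀⟩ := exists_forall_two_le_logb_and_le_mul_sqrt_collisionExponent hδ₀ 768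
  refine ⟨δ / 192, by positivity, max k₀ 1, fun k hk U hkU ↦ ?_⟩
  have hkpos : 0 < k := le_of_max_le_right hk
  obtain ⟨hL, hx⟩ := hk₀ k (le_of_max_le_left hk)
  have hLV : (1 + ε) * Real.logb 2 k ≤ Real.logb 2 U := by
    rw [← Real.logb_rpow_eq_mul_logb_of_pos (by positivity)]
    exact Real.logb_le_logb_of_le one_lt_two (by positivity) hkU
  have hroom : Real.logb 2 k + 4 * (δ * Real.logb 2 U) < Real.logb 2 U := by
    have hεV : 0 < ε * Real.logb 2 U := mul_pos hε (by nlinarith)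
    rw [hδ]
    field_simp
    linarith
  obtain ⟨X, hXU, rfl, R, j, hR, hexp, hpairs⟩ :=
    exists_keys_of_le_mul_sqrt_collisionExponent hδ₀ hδ₁ hL hroom (hx _ (by nlinarith))
  refine ⟨X, hXU, rfl, fun p hp hUp m hm ↦ ?_⟩
  have hXp : X ⊆ Ico 1 p := hXU.trans (Ico_subset_Ico_right hUp)
  exact (mul_le_mul_of_nonneg_left hexp (by positivity)).trans
    (four_pow_div_le_condCollisionProb hp hm hR hXp hkpos hpairs)

/-- Lower bound: Knudsen's bound is almost optimal. For every `ε > 0`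
there are `c > 0` and `k₀` such that for all `k ≥ k₀` and `U ≥ k^{1+ε}`, every prime
`p > U` and every `1 ≤ m ≤ U`: there exist a set `X ⊆ [U]` of exactly `k` keys, a key
`x ∈ [U] \ X` and buckets `a, b ∈ [m]` such that, for a random linear hash function `h`
with parameters `p, m` and `y, z ∈ X` uniform and independent,
`Pr(h(y) = h(z) = b ∣ h(x) = a) ≥ (1/(mk)) · exp(c·√(min(log k/log log k, log U/(log log U)²)))`. -/
theorem stmt_15 : ∀ ε : ℝ, 0 < ε → ∃ c : ℝ, 0 < c ∧ ∃ k₀ : ℕ, ∀ k : ℕ, k₀ ≤ k →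
    ∀ U : ℕ, (k : ℝ) ^ ((1 : ℝ) + ε) ≤ U →
    ∀ p : ℕ, p.Prime → U < p → ∀ m : ℕ, 1 ≤ m → m ≤ U →
    ∃ X : Finset ℕ, X ⊆ Finset.range U ∧ X.card = k ∧
    ∃ x : ℕ, x < U ∧ x ∉ X ∧ ∃ a b : ℕ, a < m ∧ b < m ∧
      1 / ((m : ℝ) * k) * Real.exp (c * Real.sqrt (min
          (Real.logb 2 k / Real.logb 2 (Real.logb 2 k))
          (Real.logb 2 U / (Real.logb 2 (Real.logb 2 U)) ^ 2)))
      ≤ (((((Finset.range p ×ˢ Finset.range p) ×ˢ (X ×ˢ X)).filter fun w =>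
            ((w.1.1 * w.2.1 + w.1.2) % p) % m = b ∧
            ((w.1.1 * w.2.2 + w.1.2) % p) % m = b ∧
            ((w.1.1 * x + w.1.2) % p) % m = a).card : ℝ)
          / ((((Finset.range p ×ˢ Finset.range p).filter fun στ =>
                ((στ.1 * x + στ.2) % p) % m = a).card : ℝ) * (k : ℝ) ^ 2)) := by
  intro ε hε
  obtain ⟨c, hc, k₀, hk₀⟩ := stmt_15_general hε
  refine ⟨c, hc, k₀, fun k hk U hkU p hp hUp m hm hmU ↦ ?_⟩
  obtain ⟨X, hXU, rfl, hX⟩ := hk₀ k hk U hkU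
  exact ⟨X, fun y hy ↦ mem_range.2 (mem_Ico.1 (hXU hy)).2, rfl, 0, hm.trans hmU,
    fun h ↦ by simpa using hXU h, 0, 0, hm, hm, hX p hp hUp.le m hm⟩
end

section
/- Let p be a prime, let y, z be integers with 1 ≤ y, z < p, and let T be a positive integer. Then the number of pairs (i, j) of integers with 1 ≤ i < T, 1 ≤ j < T, and i·z ≡ j·y (mod p) is at least ⌈ T / H(y/z) ⌉ − 1. -/
/-- The height of a nonzero rational `q = a/b` in lowest terms is `max |a| |b|`. -/
def ratHeight (q : ℚ) : ℕ := max q.num.natAbs q.den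

/-!
If `a / b` is `y / z` in lowest terms, then `a * z = b * y`, so all multiples `(k * a, k * b)` of
`(a, b)` solve the congruence, whatever the modulus. Those with `1 ≤ k` and
`k * max a b < T` lie in the box, and there are `⌈T / max a b⌉ - 1` of them.
-/

theorem lt_ceil_natCast_div_iff {K : Type*} [Semifield K] [LinearOrder K] [IsStrictOrderedRing K]
    [FloorSemiring K] {k T M : ℕ} (hM : 0 < M) : k < ⌈(T : K) / M⌉₊ ↔ k * M < T := by
  rw [Nat.lt_ceil, lt_div_iff₀ (Nat.cast_pos.mpr hM)]
  norm_cast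

theorem ceil_div_max_sub_one_le_card_filter_modEq {n a b y z : ℕ} (ha : 0 < a) (hb : 0 < b)
    (hab : a * z ≡ b * y [MOD n]) (T : ℕ) :
    ⌈(T : ℚ) / (max a b : ℕ)⌉₊ - 1 ≤
      {ij ∈ Finset.Ico 1 T ×ˢ Finset.Ico 1 T | ij.1 * z ≡ ij.2 * y [MOD n]}.card := by
  rw [← Nat.card_Ico]
  refine Finset.card_le_card_of_injOn (fun k ↦ (k * a, k * b)) (fun k hk ↦ ?_)
    (fun k _ l _ hkl ↦ Nat.eq_of_mul_eq_mul_right ha (Prod.mk.inj hkl).1)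
  obtain ⟨hk_pos, hk_lt⟩ := Finset.mem_Ico.mp hk
  have hkT : k * max a b < T := (lt_ceil_natCast_div_iff (lt_max_of_lt_left ha)).mp hk_lt
  have hkaT : k * a < T := (Nat.mul_le_mul_left k (le_max_left a b)).trans_lt hkT
  have hkbT : k * b < T := (Nat.mul_le_mul_left k (le_max_right a b)).trans_lt hkT
  have hk_modEq : k * a * z ≡ k * b * y [MOD n] := by
    simpa only [mul_assoc] using hab.mul_left k
  have hk_mem : (k * a, k * b) ∈ Finset.Ico 1 T ×ˢ Finset.Ico 1 T :=
    Finset.mk_mem_product (Finset.mem_Ico.mpr ⟨Nat.mul_pos hk_pos ha, hkaT⟩)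
      (Finset.mem_Ico.mpr ⟨Nat.mul_pos hk_pos hb, hkbT⟩)
  exact Finset.mem_filter.mpr ⟨hk_mem, hk_modEq⟩

theorem natAbs_num_natCast_div_mul (y : ℕ) {z : ℕ} (hz : z ≠ 0) :
    ((y : ℚ) / z).num.natAbs * z = ((y : ℚ) / z).den * y := by
  have hnum : 0 ≤ ((y : ℚ) / z).num := Rat.num_nonneg.mpr (by positivity)
  have hcross := Rat.num_div_den ((y : ℚ) / z)
  rw [div_eq_div_iff (by positivity) (by positivity), mul_comm (y : ℚ)] at hcross
  zify
  rw [abs_of_nonneg hnum]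
  exact_mod_cast hcross

theorem stmt_17_general (n : ℕ) {y z : ℕ} (hy : 0 < y) (hz : 0 < z) (T : ℕ) :
    ⌈(T : ℚ) / ratHeight ((y : ℚ) / z)⌉ - 1 ≤
      ({ij ∈ Finset.Ico 1 T ×ˢ Finset.Ico 1 T | ij.1 * z ≡ ij.2 * y [MOD n]}.card : ℤ) := by
  have hnum : 0 < ((y : ℚ) / z).num := Rat.num_pos.mpr (by positivity)
  have hmodEq : ((y : ℚ) / z).num.natAbs * z ≡ ((y : ℚ) / z).den * y [MOD n] := by
    rw [natAbs_num_natCast_div_mul y hz.ne']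
  have hcard := ceil_div_max_sub_one_le_card_filter_modEq (Int.natAbs_pos.mpr hnum.ne')
    ((y : ℚ) / z).den_pos hmodEq T
  rw [← Int.natCast_ceil_eq_ceil (by positivity), ratHeight]
  lia

/-- For a prime `p`, integers `1 ≤ y, z < p` and a positive integer `T`,
the number of pairs `(i, j)` with `1 ≤ i < T`, `1 ≤ j < T` and `i·z ≡ j·y (mod p)` is at
least `⌈T / H(y/z)⌉ − 1`. -/
theorem stmt_17 (p : ℕ) (hp : p.Prime) (y z : ℕ) (hy1 : 1 ≤ y) (hyp : y < p)
    (hz1 : 1 ≤ z) (hzp : z < p) (T : ℕ) (hT : 0 < T) :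
    (⌈(T : ℚ) / (ratHeight ((y : ℚ) / (z : ℚ)) : ℚ)⌉ - 1 : ℤ)
      ≤ (((Finset.Ico 1 T ×ˢ Finset.Ico 1 T).filter fun ij =>
            ij.1 * z ≡ ij.2 * y [MOD p]).card : ℤ) :=
  stmt_17_general p hy1 hz1 T
end
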